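/- arXiv:1101.1231 — 8 statements merged into one kernel-verified Lean document; each statement's English description precedes it below -/
import Mathlib

section
/- Let n, m be positive integers, A, Q ∈ ℂ^{n×n} with Q = Q*, B, C ∈ ℂ^{n×m}, R = R* ∈ ℂ^{m×m}, and let Y ∈ ℂ^{n×n} be Hermitian. For every ω ∈ ℝ such that iω is not an eigenvalue of A, setting W(iω) = [[(iωI − A)^{−1}B], [I_m]] ∈ ℂ^{(n+m)×m}, the spectral density function satisfies Φ(iω) = W(iω)* M(Y) W(iω), where M(Y) = [[A*Y + YA + Q, YB + C], [B*Y + C*, R]]. In particular, if M(Y) is positive semidefinite, then Φ(iω) is positive semidefinite for all ω ∈ ℝ with iω ∉ σ(A). -/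
open Matrix ComplexOrder

/-!
The resolvent block `X = (s - A)⁻¹ B` is the solution of `A X + B = s X`. The `Y`-dependent part of
`M(Y)`, compressed by `W = [X; 1]`, is therefore
`Xᴴ Y (A X + B) + (A X + B)ᴴ Y X = (s + s̄) Xᴴ Y X`, which vanishes on the imaginary axis.
-/

section Defs

variable {n m α : Type*} [Fintype n]

/-- The matrix `M(Y)` of the linear matrix inequality `M(Y) ≥ 0` attached to the system `(A, B)` and
the weights `(Q, C, R)`. -/
def lmiMatrix [NonUnitalNonAssocSemiring α] [Star α] (A : Matrix n n α) (B : Matrix n m α)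
    (Q : Matrix n n α) (C : Matrix n m α) (R : Matrix m m α) (Y : Matrix n n α) :
    Matrix (n ⊕ m) (n ⊕ m) α :=
  fromBlocks (Aᴴ * Y + Y * A + Q) (Y * B + C) (Bᴴ * Y + Cᴴ) R

variable [DecidableEq n] [DecidableEq m] [CommRing α]

/-- The block column `W(s) = [(s - A)⁻¹ B; 1]` compressing the weight matrix to the Popov function.
It is meaningful only when `s - A` is invertible, the inverse being `0` otherwise. -/
noncomputable def popovFrame (A : Matrix n n α) (B : Matrix n m α) (s : α) :
    Matrix (n ⊕ m) m α :=
  fromRows ((s • (1 : Matrix n n α) - A)⁻¹ * B) 1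

/-- The Popov (spectral density) function `Φ(s) = W(s)ᴴ [Q, C; Cᴴ, R] W(s)`, with the adjoint taken
pointwise in `s`. -/
noncomputable def popovFunction [StarRing α] [Fintype m] (A : Matrix n n α) (B : Matrix n m α)
    (Q : Matrix n n α) (C : Matrix n m α) (R : Matrix m m α) (s : α) : Matrix m m α :=
  (popovFrame A B s)ᴴ * fromBlocks Q C Cᴴ R * popovFrame A B s

end Defs

section Semiring

variable {n m α : Type*} [Fintype n] [Fintype m] [DecidableEq m]

theorem conjTranspose_fromRows_one_mul_fromBlocks_mul [Semiring α] [StarRing α]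
    (X : Matrix n m α) (P : Matrix n n α) (S : Matrix n m α) (T : Matrix m n α)
    (U : Matrix m m α) :
    (fromRows X (1 : Matrix m m α))ᴴ * fromBlocks P S T U * fromRows X (1 : Matrix m m α) =
      Xᴴ * P * X + Xᴴ * S + T * X + U := by
  simp only [conjTranspose_fromRows_eq_fromCols_conjTranspose, fromCols_mul_fromBlocks,
    fromCols_mul_fromRows, conjTranspose_one, Matrix.one_mul, Matrix.mul_one, Matrix.add_mul]
  abel

theorem conjTranspose_fromRows_one_mul_lmiMatrix_mul [Semiring α] [StarRing α]
    (A Q Y : Matrix n n α) (B C X : Matrix n m α) (R : Matrix m m α) :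
    (fromRows X (1 : Matrix m m α))ᴴ * lmiMatrix A B Q C R Y * fromRows X (1 : Matrix m m α) =
      (fromRows X (1 : Matrix m m α))ᴴ * fromBlocks Q C Cᴴ R * fromRows X (1 : Matrix m m α) +
        (Xᴴ * Y * (A * X + B) + (A * X + B)ᴴ * Y * X) := by
  rw [lmiMatrix, conjTranspose_fromRows_one_mul_fromBlocks_mul,
    conjTranspose_fromRows_one_mul_fromBlocks_mul]
  simp only [conjTranspose_add, conjTranspose_mul, Matrix.mul_add, Matrix.add_mul,
    Matrix.mul_assoc]
  abel

end Semiring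

section Popov

variable {n m α : Type*} [Fintype n] [DecidableEq n] [CommRing α]

theorem mul_resolvent_mul_add {A : Matrix n n α} {s : α} (h : IsUnit (s • (1 : Matrix n n α) - A))
    (B : Matrix n m α) :
    A * ((s • (1 : Matrix n n α) - A)⁻¹ * B) + B = s • ((s • (1 : Matrix n n α) - A)⁻¹ * B) := by
  have hB := mul_nonsing_inv_cancel_left _ B ((isUnit_iff_isUnit_det _).mp h)
  rw [Matrix.sub_mul, Matrix.smul_mul, Matrix.one_mul] at hB
  exact (sub_eq_iff_eq_add'.mp hB).symm

variable [Fintype m] [DecidableEq m] [StarRing α]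

theorem conjTranspose_popovFrame_mul_lmiMatrix_mul {A : Matrix n n α} {s : α}
    (h : IsUnit (s • (1 : Matrix n n α) - A)) (B C : Matrix n m α) (Q Y : Matrix n n α)
    (R : Matrix m m α) :
    (popovFrame A B s)ᴴ * lmiMatrix A B Q C R Y * popovFrame A B s =
      popovFunction A B Q C R s +
        (s + star s) • (((s • (1 : Matrix n n α) - A)⁻¹ * B)ᴴ * Y *
          ((s • (1 : Matrix n n α) - A)⁻¹ * B)) := by
  rw [popovFunction, popovFrame, conjTranspose_fromRows_one_mul_lmiMatrix_mul,
    mul_resolvent_mul_add h, conjTranspose_smul, Matrix.mul_smul, Matrix.smul_mul, Matrix.smul_mul,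
    add_smul]

theorem popovFunction_eq_of_star_eq_neg {A : Matrix n n α} {s : α} (hs : star s = -s)
    (h : IsUnit (s • (1 : Matrix n n α) - A)) (B C : Matrix n m α) (Q Y : Matrix n n α)
    (R : Matrix m m α) :
    popovFunction A B Q C R s =
      (popovFrame A B s)ᴴ * lmiMatrix A B Q C R Y * popovFrame A B s := by
  rw [conjTranspose_popovFrame_mul_lmiMatrix_mul h, hs, add_neg_cancel, zero_smul, add_zero]

theorem popov_function_via_LMI_matrix_general [PartialOrder α] (A Q Y : Matrix n n α)
    (B C : Matrix n m α) (R : Matrix m m α) :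
    (∀ s : α, star s = -s → IsUnit (s • (1 : Matrix n n α) - A) →
      popovFunction A B Q C R s =
        (popovFrame A B s)ᴴ * lmiMatrix A B Q C R Y * popovFrame A B s) ∧
    ((lmiMatrix A B Q C R Y).PosSemidef →
      ∀ s : α, star s = -s → IsUnit (s • (1 : Matrix n n α) - A) →
        (popovFunction A B Q C R s).PosSemidef) := by
  refine ⟨fun s hs h => popovFunction_eq_of_star_eq_neg hs h B C Q Y R, fun hM s hs h => ?_⟩
  rw [popovFunction_eq_of_star_eq_neg hs h B C Q Y R]
  exact hM.conjTranspose_mul_mul_same _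

end Popov

/-- For every `ω ∈ ℝ` such that `iω` is not an eigenvalue of `A`, the Popov function
satisfies `Φ(iω) = W(iω)ᴴ M(Y) W(iω)` for any Hermitian `Y`, where
`W(iω) = [(iωI − A)⁻¹ B; I]`.  In particular if `M(Y)` is positive semidefinite then
`Φ(iω)` is positive semidefinite for all such `ω`. -/
theorem popov_function_via_LMI_matrix
    (n m : ℕ) (hn : 0 < n) (hm : 0 < m)
    (A Q : Matrix (Fin n) (Fin n) ℂ) (B C : Matrix (Fin n) (Fin m) ℂ)
    (R : Matrix (Fin m) (Fin m) ℂ) (hQ : Qᴴ = Q) (hR : Rᴴ = R)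
    (Y : Matrix (Fin n) (Fin n) ℂ) (hY : Yᴴ = Y) :
    (∀ ω : ℝ,
      IsUnit ((Complex.I * (ω : ℂ)) • (1 : Matrix (Fin n) (Fin n) ℂ) - A) →
      (fromRows (((Complex.I * (ω : ℂ)) • (1 : Matrix (Fin n) (Fin n) ℂ) - A)⁻¹ * B)
            (1 : Matrix (Fin m) (Fin m) ℂ))ᴴ *
          fromBlocks Q C Cᴴ R *
          fromRows (((Complex.I * (ω : ℂ)) • (1 : Matrix (Fin n) (Fin n) ℂ) - A)⁻¹ * B)
            (1 : Matrix (Fin m) (Fin m) ℂ) =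
        (fromRows (((Complex.I * (ω : ℂ)) • (1 : Matrix (Fin n) (Fin n) ℂ) - A)⁻¹ * B)
            (1 : Matrix (Fin m) (Fin m) ℂ))ᴴ *
          fromBlocks (Aᴴ * Y + Y * A + Q) (Y * B + C) (Bᴴ * Y + Cᴴ) R *
          fromRows (((Complex.I * (ω : ℂ)) • (1 : Matrix (Fin n) (Fin n) ℂ) - A)⁻¹ * B)
            (1 : Matrix (Fin m) (Fin m) ℂ)) ∧
    ((fromBlocks (Aᴴ * Y + Y * A + Q) (Y * B + C) (Bᴴ * Y + Cᴴ) R).PosSemidef →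
      ∀ ω : ℝ,
        IsUnit ((Complex.I * (ω : ℂ)) • (1 : Matrix (Fin n) (Fin n) ℂ) - A) →
        ((fromRows (((Complex.I * (ω : ℂ)) • (1 : Matrix (Fin n) (Fin n) ℂ) - A)⁻¹ * B)
              (1 : Matrix (Fin m) (Fin m) ℂ))ᴴ *
            fromBlocks Q C Cᴴ R *
            fromRows (((Complex.I * (ω : ℂ)) • (1 : Matrix (Fin n) (Fin n) ℂ) - A)⁻¹ * B)
              (1 : Matrix (Fin m) (Fin m) ℂ)).PosSemidef) := by
  have hgen := popov_function_via_LMI_matrix_general A Q Y B C R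
  exact ⟨fun ω => hgen.1 (Complex.I * ω) (by simp), fun hM ω => hgen.2 hM (Complex.I * ω) (by simp)⟩
end

section
/- Let n, m be positive integers, A, Q ∈ ℂ^{n×n} with Q = Q*, B, C ∈ ℂ^{n×m}, R = R* ∈ ℂ^{m×m}. Assume the pair (A, B) is controllable, i.e. rank [sI − A, B] = n for all s ∈ ℂ. Then the following are equivalent: (1) there exist p ∈ ℕ, X ∈ ℂ^{n×n} Hermitian, K ∈ ℂ^{p×n}, L ∈ ℂ^{p×m} satisfying the Lur'e equations A*X + XA + Q = K*K, XB + C = K*L, R = L*L; (2) there exists a Hermitian Y ∈ ℂ^{n×n} with M(Y) = [[A*Y + YA + Q, YB + C], [B*Y + C*, R]] positive semidefinite; (3) for all ω ∈ ℝ with iω not an eigenvalue of A, the matrix Φ(iω) is positive semidefinite. -/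
open Matrix ComplexOrder

/-!
Write `E = [1 0]`, `Γ = [A B]` and `L(Y) = ΓᴴYE + EᴴYΓ`, so that the LMI reads `M + L(Y) ≥ 0`. For
`iω` outside the spectrum of `A`, the vectors `z` with `Γz = iωEz` form the range of
`[(iω - A)⁻¹B; 1]`. The Hermitian form `L(Y)` vanishes on them, and `Φ(iω)` represents `M`.

If the LMI has no solution, a hyperplane separates `M` from the cone `{P - L(Y) | P ≥ 0}`. This cone
is closed because `L(Y) ≥ 0` only for `Y = 0`: positivity makes `Ez ∈ ker Y` imply `Γz ∈ ker Y`, and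
by controllability no proper subspace has this property. The hyperplane is a matrix `Z ≥ 0` with
`EZΓᴴ + ΓZEᴴ = 0` and `tr (ZM) < 0`. Factor `Z = JJᴴ`. Then `(Γ + E)J` and `(Γ - E)J` have the same
Gram matrix, hence differ by a unitary `U`, and an eigenvector `v` of `U` gives `z = Jv` with either
`Γz = iωEz` or `Ez = 0`, that is, a finite or an infinite frequency. As `U` is unitarily
diagonalizable, `tr (ZM) = tr (JᴴMJ)` is a sum of values of the form `M` at such vectors, and
therefore nonnegative: frequencies that are infinite or in the spectrum of `A` are limits of the
others.
-/

namespace KYP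

open Topology

lemma quadForm_conjTranspose_mul_mul {n k : Type*} [Fintype n] [Fintype k] (J : Matrix n k ℂ)
    (M : Matrix n n ℂ) (v : k → ℂ) :
    star v ⬝ᵥ ((Jᴴ * M * J) *ᵥ v) = star (J *ᵥ v) ⬝ᵥ (M *ᵥ (J *ᵥ v)) := by
  rw [star_mulVec, ← dotProduct_mulVec, mulVec_mulVec, mulVec_mulVec, Matrix.mul_assoc]

section ContinuousKernel

variable {T n k : Type*} [TopologicalSpace T] [Finite n] [Fintype k]

lemma exists_continuous_mulVec_eq_zero {R : Type*} [CommRing R] [TopologicalSpace R]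
    [IsTopologicalRing R] {N : T → Matrix n k R} (hN : Continuous N) {t₀ : T}
    (hsurj : Function.Surjective (N t₀).mulVec) {z₀ : k → R} (hz₀ : N t₀ *ᵥ z₀ = 0) :
    ∃ z : T → k → R, Continuous z ∧ z t₀ = z₀ ∧ ∀ t, N t *ᵥ z t = 0 := by
  classical
  have := Fintype.ofFinite n
  obtain ⟨J, hJ⟩ := mulVec_surjective_iff_exists_right_inverse.1 hsurj
  have hNJ : Continuous fun t => N t * J := hN.matrix_mul continuous_const
  -- The determinant avoids inverting `N t * J`, which is only guaranteed invertible near `t₀`.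
  refine ⟨fun t => (N t * J).det • z₀ - J *ᵥ ((N t * J).adjugate *ᵥ (N t *ᵥ z₀)), ?_, ?_,
    fun t => ?_⟩
  · exact (hNJ.matrix_det.smul continuous_const).sub (continuous_const.matrix_mulVec
      (hNJ.matrix_adjugate.matrix_mulVec (hN.matrix_mulVec continuous_const)))
  · simp [hJ, hz₀]
  · rw [mulVec_sub, mulVec_smul, mulVec_mulVec, mulVec_mulVec, mul_adjugate, smul_mulVec,
      one_mulVec, sub_self]

lemma quadForm_nonneg_of_eventually_nhdsNE {N : T → Matrix n k ℂ} (hN : Continuous N) {t₀ : T}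
    [(𝓝[≠] t₀).NeBot] (hsurj : Function.Surjective (N t₀).mulVec) {M : Matrix k k ℂ}
    (h : ∀ᶠ t in 𝓝[≠] t₀, ∀ z, N t *ᵥ z = 0 → 0 ≤ star z ⬝ᵥ (M *ᵥ z)) {z : k → ℂ}
    (hz : N t₀ *ᵥ z = 0) : 0 ≤ star z ⬝ᵥ (M *ᵥ z) := by
  obtain ⟨ζ, hζ, rfl, hker⟩ := exists_continuous_mulVec_eq_zero hN hsurj hz
  have hcont : Continuous fun t => star (ζ t) ⬝ᵥ (M *ᵥ ζ t) :=
    hζ.star.dotProduct (continuous_const.matrix_mulVec hζ)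
  exact ge_of_tendsto ((hcont.tendsto t₀).mono_left nhdsWithin_le_nhds)
    (h.mono fun t ht => ht _ (hker t))

end ContinuousKernel

section UnitaryFactor

variable {𝕜 : Type*} [RCLike 𝕜]

lemma exists_linearIsometry_apply_eq {V W : Type*} [AddCommGroup V] [Module 𝕜 V]
    [NormedAddCommGroup W] [InnerProductSpace 𝕜 W] [FiniteDimensional 𝕜 W] {S T : V →ₗ[𝕜] W}
    (h : ∀ v, ‖S v‖ = ‖T v‖) : ∃ U : W →ₗᵢ[𝕜] W, ∀ v, U (S v) = T v := by
  obtain ⟨g, hg⟩ := S.rangeRestrict.exists_rightInverse_of_surjective S.range_rangeRestrict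
  have hSg (w : LinearMap.range S) : S (g w) = w := congrArg Subtype.val (LinearMap.congr_fun hg w)
  let U₀ : LinearMap.range S →ₗᵢ[𝕜] W := ⟨T ∘ₗ g, fun w => by
    rw [LinearMap.comp_apply, ← h, hSg, Submodule.coe_norm]⟩
  refine ⟨U₀.extend, fun v => ?_⟩
  have hT : T (g (S.rangeRestrict v) - v) = 0 := by
    rw [← norm_eq_zero, ← h, map_sub, hSg, LinearMap.codRestrict_apply, sub_self, norm_zero]
  calc U₀.extend (S v) = T (g (S.rangeRestrict v)) := U₀.extend_apply (S.rangeRestrict v)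
    _ = T v := by rwa [map_sub, sub_eq_zero] at hT

lemma exists_unitary_mul_eq {n k : Type*} [Finite n] [Fintype k] [DecidableEq k]
    {X Y : Matrix n k 𝕜} (h : X * Xᴴ = Y * Yᴴ) : ∃ U ∈ unitaryGroup k 𝕜, X = Y * U := by
  classical
  have := Fintype.ofFinite n
  have hnorm (v : EuclideanSpace 𝕜 n) : ‖toEuclideanLin Yᴴ v‖ = ‖toEuclideanLin Xᴴ v‖ := by
    rw [@norm_eq_sqrt_re_inner 𝕜, @norm_eq_sqrt_re_inner 𝕜]
    simp only [EuclideanSpace.inner_eq_star_dotProduct, toLpLin_apply, star_mulVec,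
      conjTranspose_conjTranspose, dotProduct_comm (_ *ᵥ _), ← dotProduct_mulVec, mulVec_mulVec, h]
  obtain ⟨V, hV⟩ := exists_linearIsometry_apply_eq hnorm
  let U : Matrix k k 𝕜 := toEuclideanLin.symm V.toLinearMap
  have hVU : V.toLinearMap = toEuclideanLin U := (toEuclideanLin.apply_symm_apply _).symm
  have hUU : Uᴴ * U = 1 := by
    apply toEuclideanLin.injective
    rw [toLpLin_mul_same, toEuclideanLin_conjTranspose_eq_adjoint, ← hVU, toLpLin_one]
    refine LinearMap.ext fun v => ext_inner_left 𝕜 fun w => ?_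
    simp
  have hUY : U * Yᴴ = Xᴴ := by
    apply toEuclideanLin.injective
    rw [toLpLin_mul_same, ← hVU]
    exact LinearMap.ext hV
  refine ⟨Uᴴ, mem_unitaryGroup_iff.2 (by rwa [star_eq_conjTranspose, conjTranspose_conjTranspose]),
    ?_⟩
  rw [← conjTranspose_conjTranspose X, ← hUY, conjTranspose_mul, conjTranspose_conjTranspose]

end UnitaryFactor

section SkewPencil

variable {k : Type*} [Fintype k]

open scoped Matrix.Norms.L2Operator in
lemma trace_nonneg_of_forall_eigenvector [DecidableEq k] {U W : Matrix k k ℂ} (hU : IsStarNormal U)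
    (h : ∀ μ ∈ spectrum ℂ U, ∀ v, U *ᵥ v = μ • v → 0 ≤ star v ⬝ᵥ (W *ᵥ v)) : 0 ≤ W.trace := by
  have hfin : (spectrum ℂ U).Finite := U.finite_spectrum
  have hcont (f : ℂ → ℂ) : ContinuousOn f (spectrum ℂ U) := hfin.continuousOn f
  -- `P μ` is the spectral projection of `U` onto the eigenspace of `μ`.
  let P (μ : ℂ) : Matrix k k ℂ := cfc (Pi.single μ 1 : ℂ → ℂ) U
  have hPstar (μ : ℂ) : (P μ)ᴴ = P μ := by
    rw [← star_eq_conjTranspose, ← cfc_star]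
    refine cfc_congr fun z _ => ?_
    obtain rfl | hz := eq_or_ne z μ <;> simp [*]
  have hPP (μ : ℂ) : P μ * P μ = P μ := by
    rw [← cfc_mul _ _ U (hcont _) (hcont _)]
    refine cfc_congr fun z _ => ?_
    obtain rfl | hz := eq_or_ne z μ <;> simp [*]
  have hUP (μ : ℂ) : U * P μ = μ • P μ := by
    conv_lhs => rw [← cfc_id ℂ U]
    rw [← cfc_mul _ _ U (hcont _) (hcont _), ← cfc_smul _ _ U (hcont _)]
    refine cfc_congr fun z _ => ?_
    obtain rfl | hz := eq_or_ne z μ <;> simp [*]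
  have hsum : ∑ μ ∈ hfin.toFinset, P μ = 1 := by
    rw [← cfc_sum _ U _ fun _ _ => hcont _, ← cfc_one ℂ U]
    refine cfc_congr fun z hz => ?_
    simpa [Finset.sum_apply, Pi.single_apply] using hz
  have htrace : W.trace = ∑ μ ∈ hfin.toFinset, ((P μ)ᴴ * W * P μ).trace := by
    conv_lhs => rw [← one_mul W, ← hsum, Finset.sum_mul, trace_sum]
    exact Finset.sum_congr rfl fun μ _ => by rw [hPstar, trace_mul_cycle, hPP]
  rw [htrace]
  refine Finset.sum_nonneg fun μ hμ => Finset.sum_nonneg fun j _ => ?_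
  have hcol : U *ᵥ (P μ).col j = μ • (P μ).col j := congrArg (col · j) (hUP μ)
  rw [Matrix.mul_assoc]
  exact h μ (hfin.mem_toFinset.1 hμ) _ hcol

lemma exists_add_one_eq_I_mul_sub_one {μ : ℂ} (hμ : ‖μ‖ = 1) (hμ1 : μ ≠ 1) :
    ∃ ω : ℝ, μ + 1 = Complex.I * ω * (μ - 1) := by
  have hsub : μ - 1 ≠ 0 := sub_ne_zero.2 hμ1
  have hμ0 : μ ≠ 0 := by
    rintro rfl
    simp at hμ
  have hsub' : 1 - μ ≠ 0 := sub_ne_zero.2 hμ1.symm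
  have hconj : starRingEnd ℂ μ = μ⁻¹ := (Complex.inv_eq_conj hμ).symm
  have hreal : starRingEnd ℂ ((μ + 1) / (Complex.I * (μ - 1))) =
      (μ + 1) / (Complex.I * (μ - 1)) := by
    rw [map_div₀, map_mul, map_add, map_sub, map_one, hconj, Complex.conj_I]
    field_simp
    ring
  obtain ⟨ω, hω⟩ := Complex.conj_eq_iff_real.1 hreal
  refine ⟨ω, ?_⟩
  rw [← hω]
  field_simp

open scoped Matrix.Norms.L2Operator in
lemma trace_nonneg_of_skew_pencil {n : Type*} [Finite n] {F G : Matrix n k ℂ} {W : Matrix k k ℂ}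
    (hFG : G * Fᴴ + F * Gᴴ = 0)
    (hfin : ∀ (ω : ℝ) v, G *ᵥ v = (Complex.I * ω) • F *ᵥ v → 0 ≤ star v ⬝ᵥ (W *ᵥ v))
    (hinf : ∀ v, F *ᵥ v = 0 → 0 ≤ star v ⬝ᵥ (W *ᵥ v)) : 0 ≤ W.trace := by
  classical
  have hgram : (G + F) * (G + F)ᴴ = (G - F) * (G - F)ᴴ := by
    have h : (G + F) * (G + F)ᴴ - (G - F) * (G - F)ᴴ = (2 : ℂ) • (G * Fᴴ + F * Gᴴ) := by
      simp only [conjTranspose_add, conjTranspose_sub, Matrix.add_mul, Matrix.sub_mul,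
        Matrix.mul_add, Matrix.mul_sub]
      module
    rw [← sub_eq_zero, h, hFG, smul_zero]
  obtain ⟨U, hU, hGF⟩ := exists_unitary_mul_eq hgram
  refine trace_nonneg_of_forall_eigenvector (isStarNormal_of_mem_unitary hU) fun μ hμ v hv => ?_
  have hcayley : (μ - 1) • G *ᵥ v = (μ + 1) • F *ᵥ v := by
    have h : (G + F) *ᵥ v = μ • (G - F) *ᵥ v := by rw [hGF, ← mulVec_mulVec, hv, mulVec_smul]
    rw [add_mulVec, sub_mulVec] at h
    linear_combination (norm := module) -h
  obtain rfl | hμ1 := eq_or_ne μ 1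
  · have h2 : (2 : ℂ) • F *ᵥ v = 0 := by
      rw [← one_add_one_eq_two, ← hcayley, sub_self, zero_smul]
    exact hinf v ((smul_eq_zero.1 h2).resolve_left two_ne_zero)
  · have hμn : ‖μ‖ = 1 := spectrum.norm_eq_one_of_unitary hU hμ
    obtain ⟨ω, hω⟩ := exists_add_one_eq_I_mul_sub_one hμn hμ1
    refine hfin ω v (smul_right_injective _ (sub_ne_zero.2 hμ1) ?_)
    change (μ - 1) • _ = (μ - 1) • _
    rw [hcayley, hω, mul_comm, mul_smul]

end SkewPencil

section ClosedCone

variable {E F : Type*} [NormedAddCommGroup E] [NormedSpace ℝ E] [FiniteDimensional ℝ E]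
  [NormedAddCommGroup F] [NormedSpace ℝ F]

lemma exists_pos_mul_norm_le_of_cone (C : ProperCone ℝ E) (f : E →L[ℝ] F)
    (hf : ∀ x ∈ C, f x = 0 → x = 0) : ∃ c > 0, ∀ x ∈ C, c * ‖x‖ ≤ ‖f x‖ := by
  have : ProperSpace E := FiniteDimensional.proper ℝ E
  have hcompact : IsCompact ((C : Set E) ∩ Metric.sphere 0 1) :=
    (isCompact_sphere 0 1).inter_left C.isClosed
  obtain ⟨c, hc, hcf⟩ := hcompact.exists_forall_le' f.continuous.norm.continuousOn (a := 0)
    fun x ⟨hx, hx1⟩ => norm_pos_iff.2 fun h0 => by simp [hf x hx h0] at hx1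
  refine ⟨c, hc, fun x hx => ?_⟩
  obtain rfl | hx0 := eq_or_ne x 0
  · simp
  have hn : 0 < ‖x‖ := norm_pos_iff.2 hx0
  have h := hcf (‖x‖⁻¹ • x) ⟨C.smul_mem hx (inv_nonneg.2 hn.le), by simp [norm_smul, hn.ne']⟩
  rwa [map_smul, norm_smul, norm_inv, norm_norm, inv_mul_eq_div, le_div_iff₀ hn] at h

lemma isClosed_image_of_cone (C : ProperCone ℝ E) (f : E →L[ℝ] F)
    (hf : ∀ x ∈ C, f x = 0 → x = 0) : IsClosed (f '' C) := by
  have : ProperSpace E := FiniteDimensional.proper ℝ E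
  obtain ⟨c, hc, hcf⟩ := exists_pos_mul_norm_le_of_cone C f hf
  refine IsSeqClosed.isClosed fun y y₀ hy hlim => ?_
  choose x hxC hxy using hy
  obtain ⟨b, hb⟩ := hlim.norm.bddAbove_range
  have hbdd (j : ℕ) : x j ∈ Metric.closedBall 0 (b / c) := by
    rw [mem_closedBall_zero_iff, le_div_iff₀' hc]
    exact (hcf _ (hxC j)).trans (hxy j ▸ hb ⟨j, rfl⟩)
  obtain ⟨x₀, -, φ, hφ, hx₀⟩ := (isCompact_closedBall (0 : E) (b / c)).tendsto_subseq hbdd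
  refine ⟨x₀, C.isClosed.mem_of_tendsto hx₀ (.of_forall fun j => hxC _), ?_⟩
  exact tendsto_nhds_unique ((f.continuous.tendsto x₀).comp hx₀)
    ((hlim.comp hφ.tendsto_atTop).congr fun j => (hxy (φ j)).symm)

lemma exists_strongDual_of_forall_add_notMem (C : ProperCone ℝ E) (V : Submodule ℝ E)
    (hCV : ∀ x ∈ C, x ∈ V → x = 0) {x₀ : E} (hx₀ : ∀ v ∈ V, x₀ + v ∉ C) :
    ∃ f : StrongDual ℝ E, (∀ x ∈ C, 0 ≤ f x) ∧ (∀ v ∈ V, f v = 0) ∧ f x₀ < 0 := by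
  have : IsClosed (V : Set E) := V.closed_of_finiteDimensional
  have hclosed : IsClosed (V.mkQL '' C) := isClosed_image_of_cone C V.mkQL fun x hx hx0 =>
    hCV x hx ((Submodule.Quotient.mk_eq_zero V).1 hx0)
  let D : ProperCone ℝ (E ⧸ V) := ⟨C.toPointedCone.map V.mkQ, hclosed⟩
  have hD : V.mkQ x₀ ∉ D := by
    rintro ⟨x, hx, hxx₀⟩
    refine hx₀ (x - x₀) ((Submodule.Quotient.eq V).1 hxx₀) ?_
    rwa [add_sub_cancel]
  obtain ⟨g, hgD, hg⟩ := D.hyperplane_separation_point hD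
  refine ⟨g ∘L V.mkQL, fun x hx => hgD _ ⟨x, hx, rfl⟩, fun v hv => ?_, hg⟩
  have hv0 : V.mkQL v = 0 := (Submodule.Quotient.mk_eq_zero V).2 hv
  rw [ContinuousLinearMap.comp_apply, hv0, map_zero]

end ClosedCone

section TraceDuality

variable {k : Type*} [Fintype k]

lemma exists_trace_mul_eq {R : Type*} [CommSemiring R] (g : Module.Dual R (Matrix k k R)) :
    ∃ W : Matrix k k R, ∀ X, (W * X).trace = g X := by
  classical
  refine ⟨of fun i j => g (single j i 1), fun X => ?_⟩
  conv_rhs => rw [matrix_eq_sum_single X]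
  have hsingle (i j) : g (single i j (X i j)) = X i j * g (single i j 1) := by
    rw [← smul_eq_mul, ← map_smul, smul_single, smul_eq_mul, mul_one]
  simp only [map_sum, trace, diag_apply, mul_apply, of_apply, hsingle]
  rw [Finset.sum_comm]
  simp only [mul_comm]

lemma exists_isHermitian_trace_mul_eq (f : Module.Dual ℝ (Matrix k k ℂ)) :
    ∃ Z : Matrix k k ℂ, Z.IsHermitian ∧
      ∀ X : Matrix k k ℂ, X.IsHermitian → (Z * X).trace = f X := by
  obtain ⟨W, hW⟩ := exists_trace_mul_eq (((2⁻¹ : ℝ) • f).extendRCLike (𝕜 := ℂ))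
  have hre (X : Matrix k k ℂ) : (W * X).trace.re = 2⁻¹ * f X := by
    rw [hW]
    exact Module.Dual.re_extendRCLike_apply (𝕜 := ℂ) _ X
  refine ⟨W + Wᴴ, isHermitian_add_transpose_self W, fun X hX => ?_⟩
  have hstar : (Wᴴ * X).trace = starRingEnd ℂ (W * X).trace := by
    rw [starRingEnd_apply, ← trace_conjTranspose, conjTranspose_mul, hX.eq, trace_mul_comm]
  rw [Matrix.add_mul, trace_add, hstar, Complex.add_conj, hre, mul_inv_cancel_left₀ two_ne_zero]

lemma posSemidef_of_forall_trace_mul_nonneg {Z : Matrix k k ℂ} (hZ : Z.IsHermitian)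
    (h : ∀ P : Matrix k k ℂ, P.PosSemidef → 0 ≤ (Z * P).trace) : Z.PosSemidef := by
  refine .of_dotProduct_mulVec_nonneg hZ fun x => ?_
  have hx : star x ⬝ᵥ (Z *ᵥ x) = (Z * vecMulVec x (star x)).trace := by
    rw [mul_vecMulVec, trace_vecMulVec, dotProduct_comm]
  rw [hx]
  exact h _ (posSemidef_vecMulVec_self_star x)

end TraceDuality

open scoped Matrix.Norms.L2Operator MatrixOrder in
lemma exists_eq_conjTranspose_mul_self_of_posSemidef {k : Type*} [Fintype k] {P : Matrix k k ℂ}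
    (hP : P.PosSemidef) : ∃ K : Matrix k k ℂ, P = Kᴴ * K := by
  classical
  exact CStarAlgebra.nonneg_iff_eq_star_mul_self.1 hP.nonneg

section Frequency

variable {n k : Type*} [Fintype k]

/-- Nonnegativity of the Hermitian form `M` on the vectors `z` with `Γ z = iω E z`, `ω` real: the
amplitudes of the solutions `z e^{iωt}` of the descriptor system `E ż = Γ z`. -/
def FrequencyNonneg (E Γ : Matrix n k ℂ) (M : Matrix k k ℂ) : Prop :=
  ∀ (ω : ℝ) (z : k → ℂ), Γ *ᵥ z = (Complex.I * ω) • E *ᵥ z → 0 ≤ star z ⬝ᵥ (M *ᵥ z)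

variable [Finite n] {E Γ : Matrix n k ℂ} {M : Matrix k k ℂ}

lemma FrequencyNonneg.nonneg_of_mulVec_eq_zero (hM : FrequencyNonneg E Γ M)
    (hE : Function.Surjective E.mulVec) {z : k → ℂ} (hz : E *ᵥ z = 0) :
    0 ≤ star z ⬝ᵥ (M *ᵥ z) := by
  let N (t : ℝ) : Matrix n k ℂ := E + (Complex.I * t) • Γ
  have hN₀ : N 0 = E := by simp [N]
  refine quadForm_nonneg_of_eventually_nhdsNE (N := N) (t₀ := 0) (by fun_prop) (by rwa [hN₀]) ?_
    (by rwa [hN₀])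
  filter_upwards [self_mem_nhdsWithin] with t (ht : t ≠ 0) z hz
  have hEz : E *ᵥ z = -((Complex.I * t) • Γ *ᵥ z) := by
    rwa [add_mulVec, smul_mulVec, add_eq_zero_iff_eq_neg] at hz
  refine hM t⁻¹ z ?_
  have ht' : (t : ℂ) ≠ 0 := Complex.ofReal_ne_zero.2 ht
  rw [hEz, ← neg_smul, smul_smul]
  have hscalar : Complex.I * (t⁻¹ : ℝ) * -(Complex.I * t) = 1 := by
    push_cast
    field_simp
    simp
  rw [hscalar, one_smul]

lemma FrequencyNonneg.trace_mul_nonneg (hM : FrequencyNonneg E Γ M)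
    (hE : Function.Surjective E.mulVec) {Z : Matrix k k ℂ} (hZ : Z.PosSemidef)
    (hEZΓ : E * Z * Γᴴ + Γ * Z * Eᴴ = 0) : 0 ≤ (Z * M).trace := by
  obtain ⟨K, rfl⟩ := exists_eq_conjTranspose_mul_self_of_posSemidef hZ
  have htrace : (Kᴴ * K * M).trace = (Kᴴᴴ * M * Kᴴ).trace := by
    rw [trace_mul_cycle, trace_mul_cycle, conjTranspose_conjTranspose]
  rw [htrace]
  refine trace_nonneg_of_skew_pencil (F := E * Kᴴ) (G := Γ * Kᴴ) ?_ (fun ω v hv => ?_)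
    fun v hv => ?_
  · rw [← hEZΓ, add_comm]
    simp only [conjTranspose_mul, conjTranspose_conjTranspose, Matrix.mul_assoc]
  · rw [quadForm_conjTranspose_mul_mul]
    exact hM ω _ (by simpa only [mulVec_mulVec] using hv)
  · rw [quadForm_conjTranspose_mul_mul]
    exact hM.nonneg_of_mulVec_eq_zero hE (by rwa [mulVec_mulVec])

end Frequency

lemma eq_top_of_forall_mem_imp_mem {K V W : Type*} [Field K] [IsAlgClosed K] [AddCommGroup V]
    [Module K V] [AddCommGroup W] [Module K W] [FiniteDimensional K W] {E Γ : V →ₗ[K] W}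
    (hE : Function.Surjective E) (hΓ : ∀ s : K, Function.Surjective (s • E - Γ))
    {p : Submodule K W} (hp : ∀ z, E z ∈ p → Γ z ∈ p) : p = ⊤ := by
  obtain ⟨g, hg⟩ := E.exists_rightInverse_of_surjective (LinearMap.range_eq_top.2 hE)
  have hEg (w : W) : E (g w) = w := LinearMap.congr_fun hg w
  let f : Module.End K (W ⧸ p) := p.mapQ p (Γ ∘ₗ g) fun w hw => hp _ (by rwa [hEg])
  have hf (z : V) : f (Submodule.Quotient.mk (E z)) = Submodule.Quotient.mk (Γ z) := by
    refine (Submodule.Quotient.eq p).2 ?_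
    change Γ (g (E z)) - Γ z ∈ p
    rw [← map_sub]
    exact hp _ (by simp [hEg])
  -- An eigenvalue `μ` of the quotient map `f` contradicts surjectivity of `μ E - Γ`.
  by_contra hne
  have : Nontrivial (W ⧸ p) := Submodule.Quotient.nontrivial_iff.2 hne
  obtain ⟨μ, hμ⟩ := Module.End.exists_eigenvalue f
  obtain ⟨e, he⟩ := hμ.exists_hasEigenvector
  have hsurj : Function.Surjective (μ • (1 : Module.End K (W ⧸ p)) - f) := fun q => by
    obtain ⟨w, rfl⟩ := p.mkQ_surjective q
    obtain ⟨z, rfl⟩ := hΓ μ w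
    exact ⟨p.mkQ (E z), by simp [hf]⟩
  exact he.2 (LinearMap.injective_iff_surjective.2 hsurj (by simp [he.apply_eq_smul]))

section Pencil

variable {n k : Type*} [Fintype n]

/-- The linear map `Y ↦ Γᴴ Y E + Eᴴ Y Γ`. For `E = [1 0]` and `Γ = [A B]` it is the part of the
linear matrix inequality that depends on the unknown. -/
def lyapunov (E Γ : Matrix n k ℂ) : Matrix n n ℂ →ₗ[ℂ] Matrix k k ℂ where
  toFun Y := Γᴴ * Y * E + Eᴴ * Y * Γ
  map_add' Y Z := by
    simp only [Matrix.mul_add, Matrix.add_mul]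
    abel
  map_smul' c Y := by simp

lemma lyapunov_apply (E Γ : Matrix n k ℂ) (Y : Matrix n n ℂ) :
    lyapunov E Γ Y = Γᴴ * Y * E + Eᴴ * Y * Γ := rfl

variable {E Γ : Matrix n k ℂ} {Y : Matrix n n ℂ}

lemma isHermitian_lyapunov (hY : Y.IsHermitian) : (lyapunov E Γ Y).IsHermitian := by
  rw [IsHermitian, lyapunov_apply]
  simp only [conjTranspose_add, conjTranspose_mul, conjTranspose_conjTranspose, hY.eq,
    Matrix.mul_assoc, add_comm]

variable [Fintype k]

lemma trace_mul_lyapunov (Z : Matrix k k ℂ) :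
    (Z * lyapunov E Γ Y).trace = (Y * (E * Z * Γᴴ + Γ * Z * Eᴴ)).trace := by
  have hcycle (P : Matrix k n ℂ) (N : Matrix n k ℂ) :
      (Z * (P * Y * N)).trace = (Y * (N * Z * P)).trace := by
    rw [← Matrix.mul_assoc, trace_mul_cycle, ← Matrix.mul_assoc, trace_mul_comm]
  rw [lyapunov_apply, Matrix.mul_add, Matrix.mul_add, trace_add, trace_add, hcycle, hcycle]

lemma add_eq_zero_of_forall_trace_mul_lyapunov {Z : Matrix k k ℂ} (hZ : Z.IsHermitian)
    (h : ∀ Y : Matrix n n ℂ, Y.IsHermitian → (Z * lyapunov E Γ Y).trace = 0) :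
    E * Z * Γᴴ + Γ * Z * Eᴴ = 0 := by
  set D := E * Z * Γᴴ + Γ * Z * Eᴴ with hD
  have hDH : D.IsHermitian := by
    simp only [IsHermitian, hD, conjTranspose_add, conjTranspose_mul,
      conjTranspose_conjTranspose, hZ.eq, Matrix.mul_assoc, add_comm]
  have hDD : (Dᴴ * D).trace = 0 := by rw [hDH.eq, hD, ← trace_mul_lyapunov, h D hDH]
  exact trace_conjTranspose_mul_self_eq_zero_iff.1 hDD

lemma conjTranspose_mul_lyapunov_mul {l : Type*} {V : Matrix k l ℂ} {ω : ℝ}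
    (hV : Γ * V = (Complex.I * ω) • (E * V)) : Vᴴ * lyapunov E Γ Y * V = 0 := by
  have hV' : Vᴴ * Γᴴ = -(Complex.I * ω) • (Vᴴ * Eᴴ) := by
    rw [← conjTranspose_mul, hV, conjTranspose_smul, conjTranspose_mul]
    simp
  calc Vᴴ * lyapunov E Γ Y * V = Vᴴ * Γᴴ * Y * (E * V) + Vᴴ * Eᴴ * Y * (Γ * V) := by
        rw [lyapunov_apply]
        simp only [Matrix.mul_add, Matrix.add_mul, Matrix.mul_assoc]
    _ = 0 := by
        rw [hV, hV']
        simp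

/-- The Hautus condition for the pencil `s E - Γ`: full row rank at every `s`, including infinity.
For `E = [1 0]` and `Γ = [A B]` it is controllability of `(A, B)`. -/
structure IsControllablePencil (E Γ : Matrix n k ℂ) : Prop where
  surjective_lead : Function.Surjective E.mulVec
  surjective (s : ℂ) : Function.Surjective (s • E - Γ).mulVec

variable {M : Matrix k k ℂ}

lemma IsControllablePencil.eq_zero_of_posSemidef_lyapunov (h : IsControllablePencil E Γ)
    (hY : Y.IsHermitian) (hL : (lyapunov E Γ Y).PosSemidef) : Y = 0 := by
  classical
  obtain ⟨J, hJ⟩ := mulVec_surjective_iff_exists_right_inverse.1 h.surjective_lead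
  have hker (z) (hz : Y *ᵥ (E *ᵥ z) = 0) : Y *ᵥ (Γ *ᵥ z) = 0 := by
    have hz' : star z ᵥ* (Eᴴ * Y) = 0 := by
      rw [← hY.eq, ← conjTranspose_mul, ← star_mulVec, ← mulVec_mulVec, hz, star_zero]
    have hLz : lyapunov E Γ Y *ᵥ z = Eᴴ *ᵥ (Y *ᵥ (Γ *ᵥ z)) := by
      rw [lyapunov_apply, add_mulVec, ← mulVec_mulVec, ← mulVec_mulVec, hz, mulVec_zero, zero_add]
      simp only [mulVec_mulVec, Matrix.mul_assoc]
    have hquad : star z ⬝ᵥ (lyapunov E Γ Y *ᵥ z) = 0 := by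
      rw [hLz, mulVec_mulVec, dotProduct_mulVec, hz', zero_dotProduct]
    rw [hL.dotProduct_mulVec_zero_iff, hLz] at hquad
    calc Y *ᵥ (Γ *ᵥ z) = Jᴴ *ᵥ (Eᴴ *ᵥ (Y *ᵥ (Γ *ᵥ z))) := by
          rw [mulVec_mulVec _ Jᴴ, ← conjTranspose_mul, hJ, conjTranspose_one, one_mulVec]
      _ = 0 := by rw [hquad, mulVec_zero]
  have htop := eq_top_of_forall_mem_imp_mem (p := LinearMap.ker Y.mulVecLin) (E := E.mulVecLin)
    (Γ := Γ.mulVecLin) h.surjective_lead (fun s w => ?_) hker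
  · rw [LinearMap.ker_eq_top] at htop
    exact ext_iff_mulVec.2 fun v => by rw [zero_mulVec]; exact LinearMap.congr_fun htop v
  · obtain ⟨z, hz⟩ := h.surjective s w
    exact ⟨z, by simpa [sub_mulVec, smul_mulVec] using hz⟩

open scoped Matrix.Norms.L2Operator MatrixOrder in
theorem IsControllablePencil.exists_posSemidef_add_lyapunov (h : IsControllablePencil E Γ)
    (hM : M.IsHermitian) (hMfreq : FrequencyNonneg E Γ M) :
    ∃ Y : Matrix n n ℂ, Y.IsHermitian ∧ (M + lyapunov E Γ Y).PosSemidef := by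
  classical
  by_contra! hno
  let V : Submodule ℝ (Matrix k k ℂ) :=
    (selfAdjoint.submodule ℝ (Matrix n n ℂ)).map ((lyapunov E Γ).restrictScalars ℝ)
  obtain ⟨f, hfpos, hfV, hfM⟩ := exists_strongDual_of_forall_add_notMem
    (ProperCone.positive ℝ (Matrix k k ℂ)) V (x₀ := M)
    (fun L hL ⟨Y, hY, hYL⟩ => by
      have hLpos : (lyapunov E Γ Y).PosSemidef := nonneg_iff_posSemidef.1 (hYL ▸ hL)
      rw [← hYL, h.eq_zero_of_posSemidef_lyapunov hY hLpos, map_zero])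
    (fun L ⟨Y, hY, hYL⟩ hpos => hno Y hY (nonneg_iff_posSemidef.1 (hYL ▸ hpos)))
  obtain ⟨Z, hZ, hZf⟩ := exists_isHermitian_trace_mul_eq f.toLinearMap
  have hZpos : Z.PosSemidef := posSemidef_of_forall_trace_mul_nonneg hZ fun P hP => by
    rw [hZf P hP.1]
    exact Complex.zero_le_real.2 (hfpos P hP.nonneg)
  have hskew : E * Z * Γᴴ + Γ * Z * Eᴴ = 0 :=
    add_eq_zero_of_forall_trace_mul_lyapunov hZ fun Y hY => by
      rw [hZf _ (isHermitian_lyapunov hY)]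
      exact Complex.ofReal_eq_zero.2 (hfV _ ⟨Y, hY, rfl⟩)
  have hZM := hMfreq.trace_mul_nonneg h.surjective_lead hZpos hskew
  rw [hZf M hM] at hZM
  exact hfM.not_ge (Complex.zero_le_real.1 hZM)

end Pencil

section Popov

variable {n m : Type*} [Fintype n] [Fintype m] [DecidableEq n]

lemma isControllablePencil_of_rank_eq_card {A : Matrix n n ℂ} {B : Matrix n m ℂ}
    (h : ∀ s : ℂ, (fromCols (s • 1 - A) B).rank = Fintype.card n) :
    IsControllablePencil (fromCols 1 0) (fromCols A B) where
  surjective_lead w := ⟨Sum.elim w 0, by simp [fromCols_mulVec]⟩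
  surjective s w := by
    have hrange : LinearMap.range (fromCols (s • 1 - A) B).mulVecLin = ⊤ :=
      Submodule.eq_top_of_finrank_eq ((h s).trans (Module.finrank_fintype_fun_eq_card ℂ).symm)
    obtain ⟨z, hz⟩ := LinearMap.range_eq_top.1 hrange w
    refine ⟨Sum.elim (z ∘ Sum.inl) (-(z ∘ Sum.inr)), ?_⟩
    rw [← hz]
    rw [mulVecLin_apply, sub_mulVec, smul_mulVec]
    simp only [fromCols_mulVec, Sum.elim_comp_inl, Sum.elim_comp_inr, sub_mulVec, smul_mulVec,
      one_mulVec, zero_mulVec, mulVec_neg, neg_zero, add_zero]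
    abel

lemma eventually_isUnit_smul_one_sub (A : Matrix n n ℂ) (ω : ℝ) :
    ∀ᶠ η : ℝ in 𝓝[≠] ω, IsUnit ((Complex.I * η) • 1 - A) := by
  have hinj : Function.Injective fun η : ℝ => Complex.I * η := fun η θ h => by simpa using h
  have hfin : {η : ℝ | Complex.I * η ∈ spectrum ℂ A}.Finite :=
    A.finite_spectrum.preimage hinj.injOn
  filter_upwards [nhdsNE_le_cofinite ω hfin.compl_mem_cofinite] with η hη
  rwa [Set.mem_compl_iff, Set.mem_ofPred_eq, spectrum.mem_iff, not_not,
    Algebra.algebraMap_eq_smul_one] at hη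

variable [DecidableEq m]

/-- The matrix `[(s - A)⁻¹B; 1]`, whose range is the solution space of `s x = A x + B u`. With
`G = inputResponse A B s`, the spectral density at `s` is `Φ(s) = Gᴴ M G`. For `s` in the spectrum
of `A` the inverse, and with it the upper block, is `0`. -/
noncomputable def inputResponse (A : Matrix n n ℂ) (B : Matrix n m ℂ) (s : ℂ) :
    Matrix (n ⊕ m) m ℂ :=
  fromRows ((s • (1 : Matrix n n ℂ) - A)⁻¹ * B) (1 : Matrix m m ℂ)

variable {A : Matrix n n ℂ} {B : Matrix n m ℂ} {s : ℂ}

lemma fromCols_mul_inputResponse (hs : IsUnit (s • 1 - A)) :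
    fromCols A B * inputResponse A B s =
      s • (fromCols (1 : Matrix n n ℂ) (0 : Matrix n m ℂ) * inputResponse A B s) := by
  have hB : (s • 1 - A) * ((s • 1 - A)⁻¹ * B) = B :=
    mul_nonsing_inv_cancel_left _ B ((isUnit_iff_isUnit_det _).1 hs)
  rw [inputResponse, fromCols_mul_fromRows, fromCols_mul_fromRows]
  simp only [Matrix.mul_one, Matrix.one_mul, add_zero]
  rw [Matrix.sub_mul, Matrix.smul_mul, Matrix.one_mul, sub_eq_iff_eq_add'] at hB
  exact hB.symm

lemma inputResponse_mulVec_comp_inr (hs : IsUnit (s • 1 - A)) {z : n ⊕ m → ℂ}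
    (hz : fromCols A B *ᵥ z = s • fromCols (1 : Matrix n n ℂ) (0 : Matrix n m ℂ) *ᵥ z) :
    inputResponse A B s *ᵥ (z ∘ Sum.inr) = z := by
  rw [fromCols_mulVec, fromCols_mulVec, zero_mulVec, add_zero, one_mulVec] at hz
  have hx : B *ᵥ (z ∘ Sum.inr) = (s • 1 - A) *ᵥ (z ∘ Sum.inl) := by
    rw [sub_mulVec, smul_mulVec, one_mulVec, ← hz, add_sub_cancel_left]
  rw [inputResponse, fromRows_mulVec, ← mulVec_mulVec, hx, mulVec_mulVec,
    nonsing_inv_mul _ ((isUnit_iff_isUnit_det _).1 hs), one_mulVec, one_mulVec,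
    Sum.elim_comp_inl_inr]

variable {M : Matrix (n ⊕ m) (n ⊕ m) ℂ}

lemma frequencyNonneg_of_posSemidef_inputResponse
    (hAB : IsControllablePencil (fromCols 1 0) (fromCols A B))
    (h : ∀ ω : ℝ, IsUnit ((Complex.I * ω) • 1 - A) →
      ((inputResponse A B (Complex.I * ω))ᴴ * M * inputResponse A B (Complex.I * ω)).PosSemidef) :
    FrequencyNonneg (fromCols 1 0) (fromCols A B) M := by
  intro ω z hz
  let E : Matrix n (n ⊕ m) ℂ := fromCols 1 0
  let N (η : ℝ) : Matrix n (n ⊕ m) ℂ := (Complex.I * η) • E - fromCols A B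
  have hN (η : ℝ) (z) : N η *ᵥ z = 0 ↔ fromCols A B *ᵥ z = (Complex.I * η) • E *ᵥ z := by
    rw [sub_mulVec, smul_mulVec, sub_eq_zero, eq_comm]
  refine quadForm_nonneg_of_eventually_nhdsNE (N := N) (t₀ := ω) (by fun_prop)
    (hAB.surjective _) ?_ ((hN ω z).2 hz)
  filter_upwards [eventually_isUnit_smul_one_sub A ω] with η hη z hz
  rw [← inputResponse_mulVec_comp_inr hη ((hN η z).1 hz), ← quadForm_conjTranspose_mul_mul]
  exact (h η hη).dotProduct_mulVec_nonneg _

theorem exists_posSemidef_add_lyapunov_iff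
    (hAB : IsControllablePencil (fromCols 1 0) (fromCols A B)) (hM : M.IsHermitian) :
    (∃ Y : Matrix n n ℂ, Y.IsHermitian ∧
      (M + lyapunov (fromCols 1 0) (fromCols A B) Y).PosSemidef) ↔
    ∀ ω : ℝ, IsUnit ((Complex.I * ω) • 1 - A) →
      ((inputResponse A B (Complex.I * ω))ᴴ * M *
        inputResponse A B (Complex.I * ω)).PosSemidef := by
  refine ⟨fun ⟨Y, _, hY⟩ ω hω => ?_, fun h =>
    hAB.exists_posSemidef_add_lyapunov hM (frequencyNonneg_of_posSemidef_inputResponse hAB h)⟩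
  have := hY.conjTranspose_mul_mul_same (inputResponse A B (Complex.I * ω))
  rwa [Matrix.mul_add, Matrix.add_mul,
    conjTranspose_mul_lyapunov_mul (fromCols_mul_inputResponse hω), add_zero] at this

end Popov

section Lure

lemma fromBlocks_add_lyapunov {n m : Type*} [Fintype n] [DecidableEq n]
    (A Q Y : Matrix n n ℂ) (B C : Matrix n m ℂ) (R : Matrix m m ℂ) :
    fromBlocks Q C Cᴴ R + lyapunov (fromCols 1 0) (fromCols A B) Y =
      fromBlocks (Aᴴ * Y + Y * A + Q) (Y * B + C) (Bᴴ * Y + Cᴴ) R := by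
  rw [lyapunov_apply, conjTranspose_fromCols_eq_fromRows_conjTranspose,
    conjTranspose_fromCols_eq_fromRows_conjTranspose, fromRows_mul,
    fromRows_mul_fromCols, fromRows_mul, fromRows_mul_fromCols, fromBlocks_add, fromBlocks_add]
  simp [add_comm]

lemma posSemidef_fromBlocks_iff_exists_factor {n m : Type*} [Finite n] [Finite m]
    {P : Matrix n n ℂ} {N : Matrix n m ℂ} {R : Matrix m m ℂ} :
    (fromBlocks P N Nᴴ R).PosSemidef ↔ ∃ (p : ℕ) (K : Matrix (Fin p) n ℂ)
      (L : Matrix (Fin p) m ℂ), P = Kᴴ * K ∧ N = Kᴴ * L ∧ R = Lᴴ * L := by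
  have := Fintype.ofFinite n
  have := Fintype.ofFinite m
  have hgram (p : ℕ) (K : Matrix (Fin p) n ℂ) (L : Matrix (Fin p) m ℂ) :
      (fromCols K L)ᴴ * fromCols K L = fromBlocks (Kᴴ * K) (Kᴴ * L) (Kᴴ * L)ᴴ (Lᴴ * L) := by
    rw [conjTranspose_fromCols_eq_fromRows_conjTranspose, fromRows_mul_fromCols,
      conjTranspose_mul, conjTranspose_conjTranspose]
  constructor
  · intro h
    obtain ⟨F, hF⟩ := exists_eq_conjTranspose_mul_self_of_posSemidef h
    let D := F.submatrix (Fintype.equivFin (n ⊕ m)).symm id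
    have hD : Dᴴ * D = fromBlocks P N Nᴴ R := by
      rw [conjTranspose_submatrix, submatrix_mul_equiv, hF, submatrix_id_id]
    rw [← fromCols_toCols D, hgram, fromBlocks_inj] at hD
    exact ⟨_, D.toCols₁, D.toCols₂, hD.1.symm, hD.2.1.symm, hD.2.2.2.symm⟩
  · rintro ⟨p, K, L, rfl, rfl, rfl⟩
    rw [← hgram]
    exact posSemidef_conjTranspose_mul_self _

end Lure

end KYP

/-- For a controllable pair `(A, B)`, solvability of the Lur'e equations is
equivalent to feasibility of the associated LMI, and to positive semidefiniteness
of the Popov function `Φ(iω)` for all real `ω` with `iω ∉ σ(A)`. -/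
theorem lure_solvability_criteria
    (n m : ℕ) (hn : 0 < n) (hm : 0 < m)
    (A Q : Matrix (Fin n) (Fin n) ℂ) (B C : Matrix (Fin n) (Fin m) ℂ)
    (R : Matrix (Fin m) (Fin m) ℂ) (hQ : Qᴴ = Q) (hR : Rᴴ = R)
    (hctrb : ∀ s : ℂ,
      (fromCols (s • (1 : Matrix (Fin n) (Fin n) ℂ) - A) B).rank = n) :
    ((∃ (p : ℕ) (X : Matrix (Fin n) (Fin n) ℂ) (K : Matrix (Fin p) (Fin n) ℂ)
        (L : Matrix (Fin p) (Fin m) ℂ), Xᴴ = X ∧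
          Aᴴ * X + X * A + Q = Kᴴ * K ∧ X * B + C = Kᴴ * L ∧ R = Lᴴ * L) ↔
      (∃ Y : Matrix (Fin n) (Fin n) ℂ, Yᴴ = Y ∧
        (fromBlocks (Aᴴ * Y + Y * A + Q) (Y * B + C) (Bᴴ * Y + Cᴴ) R).PosSemidef)) ∧
    ((∃ Y : Matrix (Fin n) (Fin n) ℂ, Yᴴ = Y ∧
        (fromBlocks (Aᴴ * Y + Y * A + Q) (Y * B + C) (Bᴴ * Y + Cᴴ) R).PosSemidef) ↔
      (∀ ω : ℝ,
        IsUnit ((Complex.I * (ω : ℂ)) • (1 : Matrix (Fin n) (Fin n) ℂ) - A) →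
        ((fromRows (((Complex.I * (ω : ℂ)) • (1 : Matrix (Fin n) (Fin n) ℂ) - A)⁻¹ * B)
              (1 : Matrix (Fin m) (Fin m) ℂ))ᴴ *
            fromBlocks Q C Cᴴ R *
            fromRows (((Complex.I * (ω : ℂ)) • (1 : Matrix (Fin n) (Fin n) ℂ) - A)⁻¹ * B)
              (1 : Matrix (Fin m) (Fin m) ℂ)).PosSemidef)) := by
  constructor
  · have hfactor (Y : Matrix (Fin n) (Fin n) ℂ) (hY : Yᴴ = Y) :
        (fromBlocks (Aᴴ * Y + Y * A + Q) (Y * B + C) (Bᴴ * Y + Cᴴ) R).PosSemidef ↔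
          ∃ (p : ℕ) (K : Matrix (Fin p) (Fin n) ℂ) (L : Matrix (Fin p) (Fin m) ℂ),
            Aᴴ * Y + Y * A + Q = Kᴴ * K ∧ Y * B + C = Kᴴ * L ∧ R = Lᴴ * L := by
      rw [← KYP.posSemidef_fromBlocks_iff_exists_factor, conjTranspose_add, conjTranspose_mul, hY]
    constructor
    · rintro ⟨p, X, K, L, hX, hKL⟩
      exact ⟨X, hX, (hfactor X hX).2 ⟨p, K, L, hKL⟩⟩
    · rintro ⟨Y, hY, hLMI⟩
      obtain ⟨p, K, L, hKL⟩ := (hfactor Y hY).1 hLMI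
      exact ⟨p, Y, K, L, hY, hKL⟩
  · have hAB : KYP.IsControllablePencil (fromCols 1 0) (fromCols A B) :=
      KYP.isControllablePencil_of_rank_eq_card fun s => by rw [hctrb, Fintype.card_fin]
    have hM : (fromBlocks Q C Cᴴ R).IsHermitian := .fromBlocks hQ rfl hR
    simpa only [IsHermitian, KYP.inputResponse, KYP.fromBlocks_add_lyapunov] using
      KYP.exists_posSemidef_add_lyapunov_iff hAB hM
end

section
/- Let n, m, p be positive integers, A, Q ∈ ℂ^{n×n} with Q = Q*, B, C ∈ ℂ^{n×m}, R = R* ∈ ℂ^{m×m}, and suppose (X, K, L) ∈ ℂ^{n×n} × ℂ^{p×n} × ℂ^{p×m} with X = X* satisfies the Lur'e equations A*X + XA + Q = K*K, XB + C = K*L, R = L*L. Define 𝓔 = [[0, −I_n, 0], [I_n, 0, 0], [0, 0, 0]] ∈ ℂ^{(2n+m)×(2n+m)}, 𝓜 = [[0, A, B], [A*, Q, C], [B*, C*, R]], and V = [[X, 0], [I_n, 0], [0, I_m]] ∈ ℂ^{(2n+m)×(n+m)}. Then: (i) V has full column rank n+m; (ii) V is 𝓔-neutral, i.e. V*𝓔V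 = 0; (iii) with W = [[I_n, 0], [−X, K*], [0, L*]] ∈ ℂ^{(2n+m)×(n+p)}, one has 𝓔V = W·[[−I_n, 0], [0, 0]] and 𝓜V = W·[[A, B], [K, L]]; in particular the column span of V is a right deflating subspace of the even matrix pencil s𝓔 + 𝓜 associated with the Lur'e equations. -/
open Matrix

/-!
The Lur'e equations say that the matrix `[[Aᴴ X + X A + Q, X B + C], [Bᴴ X + Cᴴ, R]]` factors as
`[K, L]ᴴ [K, L]`. The first block row of `𝓜 V` is `[A, B]`, and the other two are this matrix with
`X [A, B]` subtracted from its first row; so `𝓜 V` is a left multiple of `[[A, B], [K, L]]`, the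
factor `W` having `-X` where that subtraction takes place. Neutrality holds because `X - Xᴴ` is
the only block of `Vᴴ 𝓔 V` that need not vanish.
-/

variable {n m p α : Type*}

/-- `(X, K, L)` solves the Lur'e equations with data `(A, Q, B, C, R)`. -/
structure IsLureSolution [Fintype n] [Fintype p] [NonUnitalNonAssocSemiring α] [Star α]
    (A Q : Matrix n n α) (B C : Matrix n m α) (R : Matrix m m α)
    (X : Matrix n n α) (K : Matrix p n α) (L : Matrix p m α) : Prop where
  isHermitian : X.IsHermitian
  state_eq : Aᴴ * X + X * A + Q = Kᴴ * K
  cross_eq : X * B + C = Kᴴ * L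
  input_eq : R = Lᴴ * L

/-- The leading coefficient `𝓔` of the even Lur'e pencil `s𝓔 + 𝓜`. -/
def lurePencilLead (n m α : Type*) [DecidableEq n] [Zero α] [One α] [Neg α] :
    Matrix ((n ⊕ n) ⊕ m) ((n ⊕ n) ⊕ m) α :=
  fromBlocks (fromBlocks 0 (-1) 1 0) 0 0 0

/-- The constant coefficient `𝓜` of the even Lur'e pencil `s𝓔 + 𝓜`; the pencil is often written
`s𝓔 - 𝓐` with `𝓐 = -𝓜`. -/
def lurePencilConst [Zero α] [Star α]
    (A Q : Matrix n n α) (B C : Matrix n m α) (R : Matrix m m α) :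
    Matrix ((n ⊕ n) ⊕ m) ((n ⊕ n) ⊕ m) α :=
  fromBlocks (fromBlocks 0 A Aᴴ Q) (fromRows B C) (fromCols Bᴴ Cᴴ) R

/-- The matrix `V` whose columns span the deflating subspace attached to `X`, namely the graph
`{(X x, x, u)}`. -/
def lureGraphMatrix (m : Type*) [DecidableEq n] [DecidableEq m] [Zero α] [One α]
    (X : Matrix n n α) : Matrix ((n ⊕ n) ⊕ m) (n ⊕ m) α :=
  fromBlocks (fromRows X 1) 0 0 1

/-- The common left factor `W` of `𝓔 V` and `𝓜 V`. -/
def lureLeftFactor [DecidableEq n] [Zero α] [One α] [Neg α] [Star α]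
    (X : Matrix n n α) (K : Matrix p n α) (L : Matrix p m α) :
    Matrix ((n ⊕ n) ⊕ m) (n ⊕ p) α :=
  fromBlocks (fromRows 1 (-X)) (fromRows 0 Kᴴ) 0 Lᴴ

theorem rank_eq_card_of_mul_eq_one [Fintype m] [Fintype n] [DecidableEq n] [CommSemiring α]
    [StrongRankCondition α] {U : Matrix n m α} {V : Matrix m n α} (h : U * V = 1) :
    V.rank = Fintype.card n :=
  le_antisymm V.rank_le_card_width <| by
    simpa only [h, rank_one] using rank_mul_le_right U V

theorem rank_lureGraphMatrix [Fintype n] [Fintype m] [DecidableEq n] [DecidableEq m]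
    [CommSemiring α] [StrongRankCondition α] (X : Matrix n n α) :
    (lureGraphMatrix m X).rank = Fintype.card n + Fintype.card m := by
  have left_inverse :
      (fromBlocks (fromCols 0 1) 0 0 1 : Matrix (n ⊕ m) ((n ⊕ n) ⊕ m) α) *
        lureGraphMatrix m X = 1 := by
    simp [lureGraphMatrix, fromBlocks_multiply, fromCols_mul_fromRows]
  rw [rank_eq_card_of_mul_eq_one left_inverse, Fintype.card_sum]

theorem fromRows_add_fromRows [Add α] (A₁ B₁ : Matrix m n α) (A₂ B₂ : Matrix p n α) :
    fromRows A₁ A₂ + fromRows B₁ B₂ = fromRows (A₁ + B₁) (A₂ + B₂) := by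
  ext (i | i) j <;> rfl

section Pencil

variable [Fintype n] [Fintype m] [DecidableEq n] [DecidableEq m] [Ring α]

theorem lurePencilLead_mul_lureGraphMatrix (X : Matrix n n α) :
    lurePencilLead n m α * lureGraphMatrix m X = fromBlocks (fromRows (-1) X) 0 0 0 := by
  simp [lurePencilLead, lureGraphMatrix, fromBlocks_multiply, fromBlocks_mul_fromRows]

variable [StarRing α]

theorem lureGraphMatrix_conjTranspose_mul_lurePencilLead_mul (X : Matrix n n α) :
    (lureGraphMatrix m X)ᴴ * lurePencilLead n m α * lureGraphMatrix m X =
      fromBlocks (X - Xᴴ) 0 0 0 := by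
  rw [Matrix.mul_assoc, lurePencilLead_mul_lureGraphMatrix]
  simp [lureGraphMatrix, fromBlocks_multiply, fromBlocks_conjTranspose,
    conjTranspose_fromRows_eq_fromCols_conjTranspose, fromCols_mul_fromRows, neg_add_eq_sub]

theorem lurePencilConst_mul_lureGraphMatrix
    (A Q : Matrix n n α) (B C : Matrix n m α) (R : Matrix m m α) (X : Matrix n n α) :
    lurePencilConst A Q B C R * lureGraphMatrix m X =
      fromBlocks (fromRows A (Aᴴ * X + Q)) (fromRows B C) (Bᴴ * X + Cᴴ) R := by
  simp [lurePencilConst, lureGraphMatrix, fromBlocks_multiply, fromBlocks_mul_fromRows,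
    fromCols_mul_fromRows]

end Pencil

section LeftFactor

variable [Fintype n] [Fintype p] [DecidableEq n] [Ring α] [StarRing α]

theorem lureLeftFactor_mul_fromBlocks_neg_one
    (X : Matrix n n α) (K : Matrix p n α) (L : Matrix p m α) :
    lureLeftFactor X K L * (fromBlocks (-1) 0 0 0 : Matrix (n ⊕ p) (n ⊕ m) α) =
      fromBlocks (fromRows (-1) X) 0 0 0 := by
  simp [lureLeftFactor, fromBlocks_multiply]

theorem lureLeftFactor_mul_fromBlocks (A X : Matrix n n α) (B : Matrix n m α)
    (K : Matrix p n α) (L : Matrix p m α) :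
    lureLeftFactor X K L * fromBlocks A B K L =
      fromBlocks (fromRows A (Kᴴ * K - X * A)) (fromRows B (Kᴴ * L - X * B))
        (Lᴴ * K) (Lᴴ * L) := by
  simp [lureLeftFactor, fromBlocks_multiply, fromRows_mul, fromRows_add_fromRows, neg_add_eq_sub]

end LeftFactor

namespace IsLureSolution

variable [Fintype n] [Fintype p] [Ring α] [StarRing α]
  {A Q : Matrix n n α} {B C : Matrix n m α} {R : Matrix m m α}
  {X : Matrix n n α} {K : Matrix p n α} {L : Matrix p m α}

theorem conjTranspose_cross_eq (h : IsLureSolution A Q B C R X K L) :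
    Bᴴ * X + Cᴴ = Lᴴ * K := by
  simpa only [conjTranspose_add, conjTranspose_mul, conjTranspose_conjTranspose,
    h.isHermitian.eq] using congrArg conjTranspose h.cross_eq

variable [Fintype m] [DecidableEq n] [DecidableEq m]

theorem lureGraphMatrix_neutral (h : IsLureSolution A Q B C R X K L) :
    (lureGraphMatrix m X)ᴴ * lurePencilLead n m α * lureGraphMatrix m X = 0 := by
  rw [lureGraphMatrix_conjTranspose_mul_lurePencilLead_mul, h.isHermitian.eq, sub_self,
    fromBlocks_zero]

theorem lurePencilConst_mul_eq_lureLeftFactor_mul (h : IsLureSolution A Q B C R X K L) :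
    lurePencilConst A Q B C R * lureGraphMatrix m X =
      lureLeftFactor X K L * fromBlocks A B K L := by
  have state_block : Aᴴ * X + Q = Kᴴ * K - X * A := by rw [← h.state_eq]; abel
  have cross_block : C = Kᴴ * L - X * B := eq_sub_of_add_eq' h.cross_eq
  rw [lurePencilConst_mul_lureGraphMatrix, lureLeftFactor_mul_fromBlocks, state_block,
    ← cross_block, h.conjTranspose_cross_eq, h.input_eq]

end IsLureSolution

theorem lure_solution_gives_deflating_subspace_general
    [Fintype n] [Fintype m] [Fintype p] [DecidableEq n] [DecidableEq m]
    [CommRing α] [Nontrivial α] [StarRing α]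
    {A Q : Matrix n n α} {B C : Matrix n m α} {R : Matrix m m α}
    {X : Matrix n n α} {K : Matrix p n α} {L : Matrix p m α}
    (h : IsLureSolution A Q B C R X K L) :
    (lureGraphMatrix m X).rank = Fintype.card n + Fintype.card m ∧
    (lureGraphMatrix m X)ᴴ * lurePencilLead n m α * lureGraphMatrix m X = 0 ∧
    lurePencilLead n m α * lureGraphMatrix m X =
      lureLeftFactor X K L * fromBlocks (-1) 0 0 0 ∧
    lurePencilConst A Q B C R * lureGraphMatrix m X =
      lureLeftFactor X K L * fromBlocks A B K L :=
  ⟨rank_lureGraphMatrix X, h.lureGraphMatrix_neutral,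
    (lurePencilLead_mul_lureGraphMatrix X).trans
      (lureLeftFactor_mul_fromBlocks_neg_one X K L).symm,
    h.lurePencilConst_mul_eq_lureLeftFactor_mul⟩

/-- If `(X, K, L)` solves the Lur'e equations, then the columns of
`V = [[X, 0], [I, 0], [0, I]]` span an `𝓔`-neutral right deflating subspace of the
even Lur'e pencil `s𝓔 + 𝓜`: `V` has full column rank `n + m`, `Vᴴ 𝓔 V = 0`, and
with `W = [[I, 0], [−X, Kᴴ], [0, Lᴴ]]` one has `𝓔 V = W [[−I, 0], [0, 0]]` and
`𝓜 V = W [[A, B], [K, L]]`. -/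
theorem lure_solution_gives_deflating_subspace
    (n m p : ℕ) (hn : 0 < n) (hm : 0 < m) (hp : 0 < p)
    (A Q : Matrix (Fin n) (Fin n) ℂ) (B C : Matrix (Fin n) (Fin m) ℂ)
    (R : Matrix (Fin m) (Fin m) ℂ) (hQ : Qᴴ = Q) (hR : Rᴴ = R)
    (X : Matrix (Fin n) (Fin n) ℂ) (K : Matrix (Fin p) (Fin n) ℂ)
    (L : Matrix (Fin p) (Fin m) ℂ) (hX : Xᴴ = X)
    (h1 : Aᴴ * X + X * A + Q = Kᴴ * K)
    (h2 : X * B + C = Kᴴ * L)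
    (h3 : R = Lᴴ * L)
    (𝓔 𝓜 : Matrix ((Fin n ⊕ Fin n) ⊕ Fin m) ((Fin n ⊕ Fin n) ⊕ Fin m) ℂ)
    (h𝓔 : 𝓔 = fromBlocks (fromBlocks 0 (-1) 1 0) 0 0 0)
    (h𝓜 : 𝓜 = fromBlocks (fromBlocks 0 A Aᴴ Q) (fromRows B C) (fromCols Bᴴ Cᴴ) R)
    (V : Matrix ((Fin n ⊕ Fin n) ⊕ Fin m) (Fin n ⊕ Fin m) ℂ)
    (hV : V = fromBlocks (fromRows X 1) 0 0 1)
    (W : Matrix ((Fin n ⊕ Fin n) ⊕ Fin m) (Fin n ⊕ Fin p) ℂ)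
    (hW : W = fromBlocks (fromRows 1 (-X)) (fromRows 0 Kᴴ) 0 Lᴴ) :
    V.rank = n + m ∧
    Vᴴ * 𝓔 * V = 0 ∧
    𝓔 * V = W * fromBlocks (-1) 0 0 0 ∧
    𝓜 * V = W * fromBlocks A B K L := by
  subst h𝓔 h𝓜 hV hW
  simpa only [lureGraphMatrix, lurePencilLead, lurePencilConst, lureLeftFactor,
    Fintype.card_fin] using lure_solution_gives_deflating_subspace_general ⟨hX, h1, h2, h3⟩
end

section
/- Let E ∈ ℂ^{N×N}, F ∈ ℂ^{M×M}, G ∈ ℂ^{N×M}, H ∈ ℂ^{M×N} with I_N − GH invertible (equivalently, I_M − HG invertible). Define the SSF-I pencil 𝓐 − s𝓔 with 𝓐 = [[E, 0], [−H, I_M]], 𝓔 = [[I_N, −G], [0, F]], and define 𝓐_* = [[E(I_N − GH)^{−1}, 0], [−F(I_M − HG)^{−1}H, I_M]], 𝓔_* = [[I_N, −E(I_N − GH)^{−1}G], [0, F(I_M − HG)^{−1}]]. Then 𝓐_*𝓔 = 𝓔_*𝓐, and the product pencil is again in SSF-I: 𝓐_*𝓐 = [[E(I_N − GH)^{−1}E,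 0], [−(H + F(I_M − HG)^{−1}HE), I_M]] and 𝓔_*𝓔 = [[I_N, −(G + E(I_N − GH)^{−1}GF)], [0, F(I_M − HG)^{−1}F]]. -/
open Matrix

/-!
Comparing blocks, `𝓐⋆𝓔 = 𝓔⋆𝓐` says exactly that `E⋆(1 - GH) = E`, `G⋆ = E⋆G`, `F⋆(1 - HG) = F`
and `H⋆ = F⋆H`. When `1 - GH` is invertible, so is `1 - HG`, and these equations have the prescribed
blocks as their unique solution. The product pencil is again in SSF-I because each of the two
coefficient shapes is closed under multiplication.
-/

section CoefficientShapes

variable {R n m : Type*} [Ring R]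

/-- The coefficient `𝓐` of a pencil `𝓐 - s𝓔` in standard symplectic-like form I (SSF-I). Its
parameter is `H`, not the block `-H`, so that the doubling formulas read as in the paper. -/
def ssf1ConstCoeff [DecidableEq m] (E : Matrix n n R) (H : Matrix m n R) :
    Matrix (n ⊕ m) (n ⊕ m) R :=
  fromBlocks E 0 (-H) 1

/-- The coefficient `𝓔` of a pencil `𝓐 - s𝓔` in standard symplectic-like form I (SSF-I). Its
parameter is `G`, not the block `-G`, so that the doubling formulas read as in the paper. -/
def ssf1LinCoeff [DecidableEq n] (G : Matrix n m R) (F : Matrix m m R) :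
    Matrix (n ⊕ m) (n ⊕ m) R :=
  fromBlocks 1 (-G) 0 F

variable [Fintype n] [Fintype m]

theorem ssf1ConstCoeff_mul_ssf1ConstCoeff [DecidableEq m] (E E' : Matrix n n R)
    (H H' : Matrix m n R) :
    ssf1ConstCoeff E' H' * ssf1ConstCoeff E H = ssf1ConstCoeff (E' * E) (H + H' * E) := by
  simp [ssf1ConstCoeff, fromBlocks_multiply, add_comm]

theorem ssf1LinCoeff_mul_ssf1LinCoeff [DecidableEq n] (G G' : Matrix n m R)
    (F F' : Matrix m m R) :
    ssf1LinCoeff G' F' * ssf1LinCoeff G F = ssf1LinCoeff (G + G' * F) (F' * F) := by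
  simp [ssf1LinCoeff, fromBlocks_multiply, add_comm]

variable [DecidableEq n] [DecidableEq m]

theorem ssf1ConstCoeff_mul_ssf1LinCoeff (E : Matrix n n R) (F : Matrix m m R)
    (G : Matrix n m R) (H : Matrix m n R) :
    ssf1ConstCoeff E H * ssf1LinCoeff G F = fromBlocks E (-(E * G)) (-H) (H * G + F) := by
  simp [ssf1ConstCoeff, ssf1LinCoeff, fromBlocks_multiply]

theorem ssf1LinCoeff_mul_ssf1ConstCoeff (E : Matrix n n R) (F : Matrix m m R)
    (G : Matrix n m R) (H : Matrix m n R) :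
    ssf1LinCoeff G F * ssf1ConstCoeff E H = fromBlocks (E + G * H) (-G) (-(F * H)) F := by
  simp [ssf1ConstCoeff, ssf1LinCoeff, fromBlocks_multiply]

theorem ssf1ConstCoeff_mul_ssf1LinCoeff_eq_iff
    {E E' : Matrix n n R} {F F' : Matrix m m R} {G G' : Matrix n m R} {H H' : Matrix m n R} :
    ssf1ConstCoeff E' H' * ssf1LinCoeff G F = ssf1LinCoeff G' F' * ssf1ConstCoeff E H ↔
      E' * (1 - G * H) = E ∧ G' = E' * G ∧ H' = F' * H ∧ F' * (1 - H * G) = F := by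
  rw [ssf1ConstCoeff_mul_ssf1LinCoeff, ssf1LinCoeff_mul_ssf1ConstCoeff, fromBlocks_inj,
    neg_inj, neg_inj, eq_comm (a := E' * G)]
  have upper_left (hG : G' = E' * G) : E' = E + G' * H ↔ E' * (1 - G * H) = E := by
    rw [hG, Matrix.mul_sub, Matrix.mul_one, sub_eq_iff_eq_add, Matrix.mul_assoc]
  have lower_right (hH : H' = F' * H) : H' * G + F = F' ↔ F' * (1 - H * G) = F := by
    rw [hH, Matrix.mul_sub, Matrix.mul_one, sub_eq_iff_eq_add', eq_comm, Matrix.mul_assoc]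
  constructor
  · rintro ⟨hE, hG, hH, hF⟩
    exact ⟨(upper_left hG).1 hE, hG, hH, (lower_right hH).1 hF⟩
  · rintro ⟨hE, hG, hH, hF⟩
    exact ⟨(upper_left hG).2 hE, hG, hH, (lower_right hH).2 hF⟩

end CoefficientShapes

section DoublingStep

variable {R n m : Type*} [CommRing R] [Fintype n] [Fintype m] [DecidableEq n] [DecidableEq m]

theorem isUnit_one_sub_matrix_mul_comm {G : Matrix n m R} {H : Matrix m n R} :
    IsUnit (1 - G * H) ↔ IsUnit (1 - H * G) := by
  rw [isUnit_iff_isUnit_det, isUnit_iff_isUnit_det, det_one_sub_mul_comm]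

theorem sda_step_ssf1_general (E : Matrix n n R) (F : Matrix m m R) (G : Matrix n m R)
    (H : Matrix m n R) (hGH : IsUnit (1 - G * H)) :
    ssf1ConstCoeff (E * (1 - G * H)⁻¹) (F * (1 - H * G)⁻¹ * H) * ssf1LinCoeff G F =
        ssf1LinCoeff (E * (1 - G * H)⁻¹ * G) (F * (1 - H * G)⁻¹) * ssf1ConstCoeff E H ∧
      ssf1ConstCoeff (E * (1 - G * H)⁻¹) (F * (1 - H * G)⁻¹ * H) * ssf1ConstCoeff E H =
        ssf1ConstCoeff (E * (1 - G * H)⁻¹ * E) (H + F * (1 - H * G)⁻¹ * H * E) ∧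
      ssf1LinCoeff (E * (1 - G * H)⁻¹ * G) (F * (1 - H * G)⁻¹) * ssf1LinCoeff G F =
        ssf1LinCoeff (G + E * (1 - G * H)⁻¹ * G * F) (F * (1 - H * G)⁻¹ * F) := by
  have hHG : IsUnit (1 - H * G) := isUnit_one_sub_matrix_mul_comm.1 hGH
  have hE : E * (1 - G * H)⁻¹ * (1 - G * H) = E :=
    nonsing_inv_mul_cancel_right _ _ ((isUnit_iff_isUnit_det _).1 hGH)
  have hF : F * (1 - H * G)⁻¹ * (1 - H * G) = F :=
    nonsing_inv_mul_cancel_right _ _ ((isUnit_iff_isUnit_det _).1 hHG)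
  exact ⟨ssf1ConstCoeff_mul_ssf1LinCoeff_eq_iff.2 ⟨hE, rfl, rfl, hF⟩,
    ssf1ConstCoeff_mul_ssf1ConstCoeff .., ssf1LinCoeff_mul_ssf1LinCoeff ..⟩

end DoublingStep

/-- One doubling step for a pencil in SSF-I: with `𝓐⋆`, `𝓔⋆` as prescribed one has
`𝓐⋆𝓔 = 𝓔⋆𝓐`, and the product pencil `𝓐⋆𝓐 − s𝓔⋆𝓔` is again in SSF-I with the
doubled blocks. -/
theorem sda_step_ssf1
    (N M : ℕ)
    (E : Matrix (Fin N) (Fin N) ℂ) (F : Matrix (Fin M) (Fin M) ℂ)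
    (G : Matrix (Fin N) (Fin M) ℂ) (H : Matrix (Fin M) (Fin N) ℂ)
    (hGH : IsUnit (1 - G * H)) :
    (fromBlocks (E * (1 - G * H)⁻¹) (0 : Matrix (Fin N) (Fin M) ℂ)
          (-(F * (1 - H * G)⁻¹ * H)) (1 : Matrix (Fin M) (Fin M) ℂ)) *
        (fromBlocks (1 : Matrix (Fin N) (Fin N) ℂ) (-G)
          (0 : Matrix (Fin M) (Fin N) ℂ) F) =
      (fromBlocks (1 : Matrix (Fin N) (Fin N) ℂ) (-(E * (1 - G * H)⁻¹ * G))
          (0 : Matrix (Fin M) (Fin N) ℂ) (F * (1 - H * G)⁻¹)) *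
        (fromBlocks E (0 : Matrix (Fin N) (Fin M) ℂ) (-H)
          (1 : Matrix (Fin M) (Fin M) ℂ)) ∧
    (fromBlocks (E * (1 - G * H)⁻¹) (0 : Matrix (Fin N) (Fin M) ℂ)
          (-(F * (1 - H * G)⁻¹ * H)) (1 : Matrix (Fin M) (Fin M) ℂ)) *
        (fromBlocks E (0 : Matrix (Fin N) (Fin M) ℂ) (-H)
          (1 : Matrix (Fin M) (Fin M) ℂ)) =
      fromBlocks (E * (1 - G * H)⁻¹ * E) (0 : Matrix (Fin N) (Fin M) ℂ)
        (-(H + F * (1 - H * G)⁻¹ * H * E)) (1 : Matrix (Fin M) (Fin M) ℂ) ∧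
    (fromBlocks (1 : Matrix (Fin N) (Fin N) ℂ) (-(E * (1 - G * H)⁻¹ * G))
          (0 : Matrix (Fin M) (Fin N) ℂ) (F * (1 - H * G)⁻¹)) *
        (fromBlocks (1 : Matrix (Fin N) (Fin N) ℂ) (-G)
          (0 : Matrix (Fin M) (Fin N) ℂ) F) =
      fromBlocks (1 : Matrix (Fin N) (Fin N) ℂ) (-(G + E * (1 - G * H)⁻¹ * G * F))
        (0 : Matrix (Fin M) (Fin N) ℂ) (F * (1 - H * G)⁻¹ * F) :=
  sda_step_ssf1_general E F G H hGH
end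

section
/- Let n be a positive integer and let E, F, G, H ∈ ℝ^{n×n}. The SSF-I pencil 𝓐 − s𝓔 with 𝓐 = [[E, 0], [−H, I_n]] and 𝓔 = [[I_n, −G], [0, F]] is symplectic, i.e. 𝓔J𝓔^T = 𝓐J𝓐^T where J = [[0, I_n], [−I_n, 0]], if and only if F = E^T, G = G^T and H = H^T. -/
open Matrix

/-!
For `X = [[A, B], [C, D]]`, the blocks of `X * J * Xᵀ` are the pairings `P * Sᵀ - Q * Rᵀ` of the
block rows `[P, Q]` and `[R, S]` of `X`. In the two coefficients of an SSF-I pencil the identity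
and zero blocks make each pairing linear in `E`, `F`, `G`, `H`: equality of the diagonal blocks
says that `G - Gᵀ` and `Hᵀ - H` vanish, and equality of the off-diagonal blocks that `F = Eᵀ`.
-/

section SymplecticPencil

variable {m p q R : Type*} [Fintype m] [DecidableEq m] [NonAssocRing R]

variable (m R) in
/-- The matrix `[[0, 1], [-1, 0]]` of the standard symplectic form. It is the negative of Mathlib's
`Matrix.J`, following the sign convention used for symplectic pencils. -/
def pencilJ : Matrix (m ⊕ m) (m ⊕ m) R :=
  fromBlocks 0 1 (-1) 0

/-- The matrix pencil `𝓐 - s𝓔`, encoded by the pair of its coefficients, is symplectic: the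
transposes of the coefficients pull the standard symplectic form back to the same bilinear form. -/
def IsSymplecticPencil (𝓐 𝓔 : Matrix p (m ⊕ m) R) : Prop :=
  𝓔 * pencilJ m R * 𝓔ᵀ = 𝓐 * pencilJ m R * 𝓐ᵀ

theorem fromBlocks_mul_pencilJ_mul_transpose (A B : Matrix p m R) (C D : Matrix q m R) :
    fromBlocks A B C D * pencilJ m R * (fromBlocks A B C D)ᵀ =
      fromBlocks (A * Bᵀ - B * Aᵀ) (A * Dᵀ - B * Cᵀ) (C * Bᵀ - D * Aᵀ) (C * Dᵀ - D * Cᵀ) := by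
  simp only [pencilJ, fromBlocks_transpose, fromBlocks_multiply, Matrix.mul_zero, Matrix.mul_one,
    Matrix.mul_neg, Matrix.neg_mul, zero_add, add_zero, neg_add_eq_sub]

/-- The coefficient `𝓐` of a pencil `𝓐 - s𝓔` in standard symplectic-like form I, with equal block
sizes. -/
def ssf1Constant (E H : Matrix m m R) : Matrix (m ⊕ m) (m ⊕ m) R :=
  fromBlocks E 0 (-H) 1

/-- The coefficient `𝓔` of a pencil `𝓐 - s𝓔` in standard symplectic-like form I, with equal block
sizes. -/
def ssf1Leading (F G : Matrix m m R) : Matrix (m ⊕ m) (m ⊕ m) R :=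
  fromBlocks 1 (-G) 0 F

theorem ssf1Constant_mul_pencilJ_mul_transpose (E H : Matrix m m R) :
    ssf1Constant E H * pencilJ m R * (ssf1Constant E H)ᵀ =
      fromBlocks 0 E (-Eᵀ) (Hᵀ - H) := by
  simp [ssf1Constant, fromBlocks_mul_pencilJ_mul_transpose, neg_add_eq_sub]

theorem ssf1Leading_mul_pencilJ_mul_transpose (F G : Matrix m m R) :
    ssf1Leading F G * pencilJ m R * (ssf1Leading F G)ᵀ =
      fromBlocks (G - Gᵀ) Fᵀ (-F) 0 := by
  simp [ssf1Leading, fromBlocks_mul_pencilJ_mul_transpose, neg_add_eq_sub]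

theorem ssf1_symplectic_iff_general (E F G H : Matrix m m R) :
    IsSymplecticPencil (ssf1Constant E H) (ssf1Leading F G) ↔
      F = Eᵀ ∧ G = Gᵀ ∧ H = Hᵀ := by
  rw [IsSymplecticPencil, ssf1Leading_mul_pencilJ_mul_transpose,
    ssf1Constant_mul_pencilJ_mul_transpose, fromBlocks_inj, sub_eq_zero, neg_inj,
    eq_comm (a := 0), sub_eq_zero]
  constructor
  · rintro ⟨hG, -, hF, hH⟩
    exact ⟨hF, hG, hH.symm⟩
  · rintro ⟨hF, hG, hH⟩
    exact ⟨hG, by rw [hF, transpose_transpose], hF, hH.symm⟩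

end SymplecticPencil

/-- An SSF-I pencil with equal block sizes is symplectic (`𝓔J𝓔ᵀ = 𝓐J𝓐ᵀ`)
if and only if `F = Eᵀ`, `G = Gᵀ` and `H = Hᵀ`. -/
theorem ssf1_symplectic_iff
    (n : ℕ) (hn : 0 < n) (E F G H : Matrix (Fin n) (Fin n) ℝ) :
    (fromBlocks (1 : Matrix (Fin n) (Fin n) ℝ) (-G) (0 : Matrix (Fin n) (Fin n) ℝ) F) *
          fromBlocks (0 : Matrix (Fin n) (Fin n) ℝ) (1 : Matrix (Fin n) (Fin n) ℝ)
            (-1 : Matrix (Fin n) (Fin n) ℝ) (0 : Matrix (Fin n) (Fin n) ℝ) *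
          (fromBlocks (1 : Matrix (Fin n) (Fin n) ℝ) (-G)
            (0 : Matrix (Fin n) (Fin n) ℝ) F)ᵀ =
        (fromBlocks E (0 : Matrix (Fin n) (Fin n) ℝ) (-H) (1 : Matrix (Fin n) (Fin n) ℝ)) *
          fromBlocks (0 : Matrix (Fin n) (Fin n) ℝ) (1 : Matrix (Fin n) (Fin n) ℝ)
            (-1 : Matrix (Fin n) (Fin n) ℝ) (0 : Matrix (Fin n) (Fin n) ℝ) *
          (fromBlocks E (0 : Matrix (Fin n) (Fin n) ℝ) (-H)
            (1 : Matrix (Fin n) (Fin n) ℝ))ᵀ ↔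
      F = Eᵀ ∧ G = Gᵀ ∧ H = Hᵀ :=
  ssf1_symplectic_iff_general E F G H
end

section
/- Let E, G, H ∈ ℂ^{n×n} with G = G*, H = H*, and I − GH invertible, and set F = E*. Then the blocks produced by one step of the structured doubling algorithm preserve this structure: G' = G + E(I − GH)^{−1}GE* satisfies G' = (G')*, H' = H + E*(I − HG)^{−1}HE satisfies H' = (H')*, and F' = E*(I − HG)^{−1}E* equals (E')*, where E' = E(I − GH)^{−1}E. -/
open Matrix

/-!
The push-through identity `(1 - ab)⁻¹a = a(1 - ba)⁻¹` makes `(1 - ab)⁻¹a` self-adjoint whenever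
`a` and `b` are, because the adjoint of `1 - ab` is then `1 - ba`. The increments `G' - G` and
`H' - H` are conjugates of elements of this form.
-/

open scoped Ring

section Ring

variable {R : Type*} [Ring R]

theorem isUnit_one_sub_mul_comm {a b : R} : IsUnit (1 - a * b) ↔ IsUnit (1 - b * a) := by
  simpa only [spectrum.mem_iff, Units.val_one, map_one, not_iff_not] using
    spectrum.unit_mem_mul_comm (R := ℤ) (a := a) (b := b) (r := 1)

theorem ringInverse_one_sub_mul_mul {a b : R} (h : IsUnit (1 - a * b)) :
    (1 - a * b)⁻¹ʳ * a = a * (1 - b * a)⁻¹ʳ := by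
  have hcomm : a * (1 - b * a) = (1 - a * b) * a := by
    rw [mul_one_sub, one_sub_mul, mul_assoc]
  rw [Ring.inverse_mul_eq_iff_eq_mul _ _ _ h, ← mul_assoc,
    Ring.eq_mul_inverse_iff_mul_eq _ _ _ (isUnit_one_sub_mul_comm.mp h), hcomm]

end Ring

section StarRing

variable {R : Type*} [Ring R] [StarRing R] {a b : R}

theorem star_ringInverse_one_sub_mul (ha : IsSelfAdjoint a) (hb : IsSelfAdjoint b) :
    star (1 - a * b)⁻¹ʳ = (1 - b * a)⁻¹ʳ := by
  rw [← Ring.inverse_star, star_sub, star_one, star_mul, ha.star_eq, hb.star_eq]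

theorem isSelfAdjoint_ringInverse_one_sub_mul_mul (ha : IsSelfAdjoint a) (hb : IsSelfAdjoint b)
    (h : IsUnit (1 - a * b)) : IsSelfAdjoint ((1 - a * b)⁻¹ʳ * a) := by
  rw [isSelfAdjoint_iff, star_mul, ha.star_eq, star_ringInverse_one_sub_mul ha hb,
    ringInverse_one_sub_mul_mul h]

theorem isSelfAdjoint_add_mul_ringInverse_mul_mul_star (e : R) (ha : IsSelfAdjoint a)
    (hb : IsSelfAdjoint b) (h : IsUnit (1 - a * b)) :
    IsSelfAdjoint (a + e * (1 - a * b)⁻¹ʳ * a * star e) := by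
  rw [mul_assoc e]
  exact ha.add ((isSelfAdjoint_ringInverse_one_sub_mul_mul ha hb h).conjugate e)

theorem sda_step_preserves_symplectic_structure_general (e : R) {g h : R}
    (hg : IsSelfAdjoint g) (hh : IsSelfAdjoint h) (hgh : IsUnit (1 - g * h)) :
    IsSelfAdjoint (g + e * (1 - g * h)⁻¹ʳ * g * star e) ∧
    IsSelfAdjoint (h + star e * (1 - h * g)⁻¹ʳ * h * e) ∧
    star e * (1 - h * g)⁻¹ʳ * star e = star (e * (1 - g * h)⁻¹ʳ * e) := by
  refine ⟨isSelfAdjoint_add_mul_ringInverse_mul_mul_star e hg hh hgh, ?_, ?_⟩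
  · simpa only [star_star] using isSelfAdjoint_add_mul_ringInverse_mul_mul_star (star e) hh hg
      (isUnit_one_sub_mul_comm.mp hgh)
  · rw [star_mul, star_mul, star_ringInverse_one_sub_mul hg hh, mul_assoc]

end StarRing

/-- One SDA step preserves the symplectic structure `F = Eᴴ`, `G = Gᴴ`, `H = Hᴴ`
of the SSF-I blocks. -/
theorem sda_step_preserves_symplectic_structure
    (n : ℕ) (E G H : Matrix (Fin n) (Fin n) ℂ)
    (hG : Gᴴ = G) (hH : Hᴴ = H) (hGH : IsUnit (1 - G * H)) :
    (G + E * (1 - G * H)⁻¹ * G * Eᴴ)ᴴ = G + E * (1 - G * H)⁻¹ * G * Eᴴ ∧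
    (H + Eᴴ * (1 - H * G)⁻¹ * H * E)ᴴ = H + Eᴴ * (1 - H * G)⁻¹ * H * E ∧
    Eᴴ * (1 - H * G)⁻¹ * Eᴴ = (E * (1 - G * H)⁻¹ * E)ᴴ := by
  simp only [nonsing_inv_eq_ringInverse]
  exact sda_step_preserves_symplectic_structure_general E hG hH hGH
end

section
/- Let A, Q ∈ ℂ^{n×n} with Q = Q*, B, C ∈ ℂ^{n×m}, R = R* ∈ ℂ^{m×m}, γ ∈ ℝ not an eigenvalue of A, and suppose Φ(γ) = R − [B* C*]Ã^{−1}[B; C] is invertible, where Ã = [[0, A − γI], [A* − γI, Q]]. Then the (2n+m)×(2n+m) matrix M_− = [[0, A − γI, B], [A* − γI, Q, C], [B*, C*, R]] is invertible, and the product M_−^{−1} M_+ with M_+ = [[0, A + γI, B], [A* + γI, Q, C], [B*, C*, R]] has the block lower-triangular form [[Â, 0_{2n×m}], [B̂, I_m]] for some B̂ ∈ ℂ^{m×2n}, where Â = I_{2n} + 2γ Ã^{−1}S + 2γ Ã^{−1}[B; C] Φ(γ)^{−1} [B* C*] Ã^{−1} S and S = [[0, I_n], [I_n, 0]]. -/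
open Matrix

/-!
The two pencil matrices differ only in their leading block: `M₊ = M₋ + 2γ [[S, 0], [0, 0]]`.
Hence `M₋⁻¹ M₊ = I + 2γ M₋⁻¹ [[S, 0], [0, 0]]` involves only the first block column of `M₋⁻¹`,
which the Schur complement formula expresses through `Ã⁻¹` and `Φ(γ)⁻¹`.
-/

section BlockMatrices

variable {ι κ K : Type*} [Fintype ι] [DecidableEq ι] [Fintype κ] [DecidableEq κ] [CommRing K]

theorem isUnit_fromBlocks_zero₁₁ {X Y Z : Matrix ι ι K} :
    IsUnit (fromBlocks 0 X Y Z) ↔ IsUnit X ∧ IsUnit Y := by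
  rw [← isUnit_submatrix_equiv (Equiv.refl _) (Equiv.sumComm ι ι), Equiv.coe_refl,
    Equiv.sumComm_apply, fromBlocks_submatrix_sum_swap_right, submatrix_id_id,
    isUnit_fromBlocks_zero₁₂]

variable {P : Matrix ι ι K} {U : Matrix ι κ K} {V : Matrix κ ι K} {R : Matrix κ κ K}

theorem isUnit_fromBlocks_of_isUnit_schur (hP : IsUnit P) (hΦ : IsUnit (R - V * P⁻¹ * U)) :
    IsUnit (fromBlocks P U V R) := by
  let := hP.invertible
  rwa [isUnit_fromBlocks_iff_of_invertible₁₁, invOf_eq_nonsing_inv]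

theorem inv_fromBlocks_of_isUnit_schur (hP : IsUnit P) (hΦ : IsUnit (R - V * P⁻¹ * U)) :
    (fromBlocks P U V R)⁻¹ =
      fromBlocks (P⁻¹ + P⁻¹ * U * (R - V * P⁻¹ * U)⁻¹ * V * P⁻¹)
        (-(P⁻¹ * U * (R - V * P⁻¹ * U)⁻¹))
        (-((R - V * P⁻¹ * U)⁻¹ * V * P⁻¹)) (R - V * P⁻¹ * U)⁻¹ := by
  let := (isUnit_fromBlocks_of_isUnit_schur hP hΦ).invertible
  let := hP.invertible
  rw [← invOf_eq_nonsing_inv P] at hΦ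
  let := hΦ.invertible
  simpa only [invOf_eq_nonsing_inv] using invOf_fromBlocks₁₁_eq P U V R

theorem inv_fromBlocks_mul_fromBlocks_add (hP : IsUnit P) (hΦ : IsUnit (R - V * P⁻¹ * U))
    (N : Matrix ι ι K) :
    (fromBlocks P U V R)⁻¹ * fromBlocks (P + N) U V R =
      fromBlocks (1 + P⁻¹ * N + P⁻¹ * U * (R - V * P⁻¹ * U)⁻¹ * V * P⁻¹ * N) 0
        (-((R - V * P⁻¹ * U)⁻¹ * V * P⁻¹ * N)) 1 := by
  have hM : IsUnit (fromBlocks P U V R).det :=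
    (isUnit_iff_isUnit_det _).1 (isUnit_fromBlocks_of_isUnit_schur hP hΦ)
  calc (fromBlocks P U V R)⁻¹ * fromBlocks (P + N) U V R
      = (fromBlocks P U V R)⁻¹ * (fromBlocks P U V R + fromBlocks N 0 0 0) := by
        simp only [fromBlocks_add, add_zero]
    _ = 1 + (fromBlocks P U V R)⁻¹ * fromBlocks N 0 0 0 := by
        rw [Matrix.mul_add, nonsing_inv_mul _ hM]
    _ = _ := by
        rw [inv_fromBlocks_of_isUnit_schur hP hΦ, fromBlocks_multiply, ← fromBlocks_one,
          fromBlocks_add]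
        simp only [Matrix.mul_zero, add_zero, zero_add, Matrix.add_mul, Matrix.neg_mul, add_assoc]

end BlockMatrices

section LurePencil

variable {n m K : Type*} [DecidableEq n] [CommRing K] [StarRing K]

/-- The leading block `Ã = [[0, A - γI], [A* - γI, Q]]` of the Cayley-transformed Lur'e pencil. -/
def lureLeadingBlock (A Q : Matrix n n K) (γ : K) : Matrix (n ⊕ n) (n ⊕ n) K :=
  fromBlocks 0 (A - γ • 1) (Aᴴ - γ • 1) Q

/-- The Cayley-transformed Lur'e pencil: its value at `γ` is `M₋`, its value at `-γ` is `M₊`. -/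
def lureMatrix (A Q : Matrix n n K) (B C : Matrix n m K) (R : Matrix m m K) (γ : K) :
    Matrix ((n ⊕ n) ⊕ m) ((n ⊕ n) ⊕ m) K :=
  fromBlocks (lureLeadingBlock A Q γ) (fromRows B C) (fromCols Bᴴ Cᴴ) R

/-- The matrix `Φ(γ)`, the Schur complement of `Ã` in `M₋`. -/
noncomputable def lureSchur [Fintype n] (A Q : Matrix n n K) (B C : Matrix n m K)
    (R : Matrix m m K) (γ : K) : Matrix m m K :=
  R - fromCols Bᴴ Cᴴ * (lureLeadingBlock A Q γ)⁻¹ * fromRows B C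

/-- The matrix `S = [[0, I], [I, 0]]` exchanging the two halves of the index set. -/
def blockSwap (n K : Type*) [DecidableEq n] [Zero K] [One K] : Matrix (n ⊕ n) (n ⊕ n) K :=
  fromBlocks 0 1 1 0

theorem lureLeadingBlock_neg (A Q : Matrix n n K) (γ : K) :
    lureLeadingBlock A Q (-γ) = lureLeadingBlock A Q γ + (2 * γ) • blockSwap n K := by
  simp only [lureLeadingBlock, blockSwap, fromBlocks_smul, fromBlocks_add, smul_zero, add_zero]
  congr 1 <;> module

variable [Fintype n]

theorem isUnit_lureLeadingBlock {A : Matrix n n K} {γ : K} (hγ : IsSelfAdjoint γ)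
    (hA : IsUnit (γ • 1 - A)) (Q : Matrix n n K) : IsUnit (lureLeadingBlock A Q γ) := by
  have hA' : IsUnit (A - γ • 1) := IsUnit.sub_iff.1 hA
  have hstar : star (A - γ • 1) = Aᴴ - γ • 1 := by
    rw [star_sub, star_smul, star_one, hγ.star_eq, star_eq_conjTranspose]
  exact isUnit_fromBlocks_zero₁₁.2 ⟨hA', hstar ▸ hA'.star⟩

theorem cayley_lure_pencil_block_form_general [Fintype m] [DecidableEq m]
    {A Q : Matrix n n K} {B C : Matrix n m K} {R : Matrix m m K} {γ : K}
    (hγ : IsSelfAdjoint γ) (hA : IsUnit (γ • 1 - A)) (hΦ : IsUnit (lureSchur A Q B C R γ)) :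
    IsUnit (lureMatrix A Q B C R γ) ∧
    (lureMatrix A Q B C R γ)⁻¹ * lureMatrix A Q B C R (-γ) =
      fromBlocks
        (1 + (2 * γ) • ((lureLeadingBlock A Q γ)⁻¹ * blockSwap n K) +
          (2 * γ) • ((lureLeadingBlock A Q γ)⁻¹ * fromRows B C * (lureSchur A Q B C R γ)⁻¹ *
            fromCols Bᴴ Cᴴ * (lureLeadingBlock A Q γ)⁻¹ * blockSwap n K))
        0
        (-((2 * γ) • ((lureSchur A Q B C R γ)⁻¹ * fromCols Bᴴ Cᴴ *
          (lureLeadingBlock A Q γ)⁻¹ * blockSwap n K)))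
        1 := by
  have hAtil := isUnit_lureLeadingBlock hγ hA Q
  refine ⟨isUnit_fromBlocks_of_isUnit_schur hAtil hΦ, ?_⟩
  simpa only [lureMatrix, lureSchur, lureLeadingBlock_neg, Matrix.mul_smul] using
    inv_fromBlocks_mul_fromBlocks_add hAtil hΦ ((2 * γ) • blockSwap n K)

end LurePencil

/-- The Cayley-transformed Lur'e pencil: `M₋` is invertible and `M₋⁻¹ M₊` has the
block lower-triangular form `[[Â, 0], [B̂, I]]`. -/
theorem cayley_lure_pencil_block_form
    (n m : ℕ) (hn : 0 < n) (hm : 0 < m)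
    (A Q : Matrix (Fin n) (Fin n) ℂ) (B C : Matrix (Fin n) (Fin m) ℂ)
    (R : Matrix (Fin m) (Fin m) ℂ) (hQ : Qᴴ = Q) (hR : Rᴴ = R)
    (γ : ℝ) (hγ : IsUnit ((γ : ℂ) • (1 : Matrix (Fin n) (Fin n) ℂ) - A))
    (Atil : Matrix (Fin n ⊕ Fin n) (Fin n ⊕ Fin n) ℂ)
    (hAtil : Atil = fromBlocks (0 : Matrix (Fin n) (Fin n) ℂ)
      (A - (γ : ℂ) • (1 : Matrix (Fin n) (Fin n) ℂ))
      (Aᴴ - (γ : ℂ) • (1 : Matrix (Fin n) (Fin n) ℂ)) Q)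
    (Φγ : Matrix (Fin m) (Fin m) ℂ)
    (hΦγ : Φγ = R - fromCols Bᴴ Cᴴ * Atil⁻¹ * fromRows B C)
    (hΦinv : IsUnit Φγ)
    (S : Matrix (Fin n ⊕ Fin n) (Fin n ⊕ Fin n) ℂ)
    (hS : S = fromBlocks (0 : Matrix (Fin n) (Fin n) ℂ) (1 : Matrix (Fin n) (Fin n) ℂ)
      (1 : Matrix (Fin n) (Fin n) ℂ) (0 : Matrix (Fin n) (Fin n) ℂ))
    (Ahat : Matrix (Fin n ⊕ Fin n) (Fin n ⊕ Fin n) ℂ)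
    (hAhat : Ahat = 1 + ((2 * γ : ℝ) : ℂ) • (Atil⁻¹ * S) +
      ((2 * γ : ℝ) : ℂ) •
        (Atil⁻¹ * fromRows B C * Φγ⁻¹ * fromCols Bᴴ Cᴴ * Atil⁻¹ * S))
    (Mminus Mplus : Matrix ((Fin n ⊕ Fin n) ⊕ Fin m) ((Fin n ⊕ Fin n) ⊕ Fin m) ℂ)
    (hMminus : Mminus = fromBlocks Atil (fromRows B C) (fromCols Bᴴ Cᴴ) R)
    (hMplus : Mplus = fromBlocks
      (fromBlocks (0 : Matrix (Fin n) (Fin n) ℂ)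
        (A + (γ : ℂ) • (1 : Matrix (Fin n) (Fin n) ℂ))
        (Aᴴ + (γ : ℂ) • (1 : Matrix (Fin n) (Fin n) ℂ)) Q)
      (fromRows B C) (fromCols Bᴴ Cᴴ) R) :
    IsUnit Mminus ∧
    ∃ Bhat : Matrix (Fin m) (Fin n ⊕ Fin n) ℂ,
      Mminus⁻¹ * Mplus =
        fromBlocks Ahat (0 : Matrix (Fin n ⊕ Fin n) (Fin m) ℂ) Bhat
          (1 : Matrix (Fin m) (Fin m) ℂ) := by
  subst hAtil hΦγ hS hAhat hMminus hMplus
  obtain ⟨hM, hprod⟩ := cayley_lure_pencil_block_form_general (Complex.conj_ofReal γ) hγ hΦinv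
  simp only [lureMatrix, lureSchur, lureLeadingBlock, blockSwap, neg_smul, sub_neg_eq_add] at hprod
  push_cast
  exact ⟨hM, _, hprod⟩
end

section
/- Let Ê, Ĝ, Ĥ, X, T ∈ ℂ^{n×n} with Ê invertible and I − ĤX invertible. Suppose the columns of [X; I_n] span a right deflating subspace of the symplectic SSF-I pencil [[Ê, 0], [−Ĥ, I_n]] − s[[I_n, −Ĝ], [0, Ê*]] with eigenvalue matrix T, i.e. ÊX = (X − Ĝ)T and I − ĤX = Ê*T. Then X satisfies the discrete-time algebraic Riccati equation X = ÊX(I − ĤX)^{−1}Ê* + Ĝ. -/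
open Matrix

section CommRing

variable {m n R : Type*} [Fintype m] [Fintype n] [DecidableEq n] [CommRing R]

theorem mul_nonsing_inv_mul_eq_one {A B : Matrix n n R} (hAB : IsUnit (A * B)) :
    B * (A * B)⁻¹ * A = 1 := by
  have right_inverse : A * (B * (A * B)⁻¹) = 1 := by
    rw [← Matrix.mul_assoc, Matrix.mul_nonsing_inv _ ((Matrix.isUnit_iff_isUnit_det _).mp hAB)]
  exact mul_eq_one_comm.mp right_inverse

/-- `hEX` and `hFT` are the block rows of `𝓐 [X; 1] = 𝓔 [X; 1] T` for the pencil
`𝓐 - s𝓔 = [[E, 0], [-H, 1]] - s [[1, -G], [0, F]]`. -/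
theorem deflating_subspace_gives_dare_solution_general
    {E : Matrix m m R} {G X : Matrix m n R} {H : Matrix n m R} {F T : Matrix n n R}
    (hHX : IsUnit (1 - H * X)) (hEX : E * X = (X - G) * T) (hFT : 1 - H * X = F * T) :
    X = E * X * (1 - H * X)⁻¹ * F + G := by
  have hT : T * (1 - H * X)⁻¹ * F = 1 := by
    rw [hFT] at hHX ⊢
    exact mul_nonsing_inv_mul_eq_one hHX
  calc
    X = (X - G) * (T * (1 - H * X)⁻¹ * F) + G := by rw [hT, Matrix.mul_one, sub_add_cancel]
    _ = E * X * (1 - H * X)⁻¹ * F + G := by simp only [hEX, Matrix.mul_assoc]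

end CommRing

/-- If `[X; I]` spans a right deflating subspace with eigenvalue matrix `T` of the
symplectic SSF-I pencil `[[Ê, 0], [−Ĥ, I]] − s[[I, −Ĝ], [0, Êᴴ]]` (that is,
`ÊX = (X − Ĝ)T` and `I − ĤX = ÊᴴT`), with `Ê` and `I − ĤX` invertible, then `X`
satisfies the DARE `X = ÊX(I − ĤX)⁻¹Êᴴ + Ĝ`. -/
theorem deflating_subspace_gives_dare_solution
    (n : ℕ) (Ehat Ghat Hhat X T : Matrix (Fin n) (Fin n) ℂ)
    (hE : IsUnit Ehat)
    (hHX : IsUnit (1 - Hhat * X))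
    (h1 : Ehat * X = (X - Ghat) * T)
    (h2 : 1 - Hhat * X = Ehatᴴ * T) :
    X = Ehat * X * (1 - Hhat * X)⁻¹ * Ehatᴴ + Ghat :=
  deflating_subspace_gives_dare_solution_general hHX h1 h2
end
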